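/- Let d ≥ 1, let α = (α_1,…,α_d) be a multi-index with α_j > −1/2 for each j, and let 1 ≤ λ < β. Let k be the smallest integer greater than λ and n the smallest integer greater than β, and set c_λ^k = ∫_0^∞ u^{−λ−1}(e^{−u}−1)^k du (finite). Define the Laguerre fractional derivative D_λ^α f(x) = (1/c_λ^k) ∫_0^∞ s^{−λ−1} Σ_{j=0}^k binom(k,j) (−1)^j P_{(k−j)s}^α f(x) ds, with the convention P_0^α f = f. Then there exists C > 0, depending only on α, d, β, λ, such that for every bounded measurable f on (0,∞)^d satisfying sup_x |∂^n_t P_t^α f(x)| ≤ A t^{β−n} for all t > 0, one has: sup_x |D_λ^α f(x)| ≤ C (∥f∥_∞ + A), and sup_x |∂^n_t P_t^α(D_λ^α f)(x)| ≤ C (∥f∥_∞ + A) t^{β−λ−n} for all t > 0. In particular D_λ^α maps Lip_β(μ_α) boundedly into Lip_{β−λ}(μ_α). -/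

import Mathlib

open MeasureTheory Real Set

noncomputable def besselI (ν z : ℝ) : ℝ :=
  ∑' m : ℕ, (z / 2) ^ (2 * (m : ℝ) + ν) / (Nat.factorial m * Real.Gamma ((m : ℝ) + ν + 1))

/-- The positive orthant `(0,∞)^d`. -/
def posOrthant (d : ℕ) : Set (Fin d → ℝ) := Set.univ.pi fun _ => Set.Ioi 0

/-- The Poisson–Laguerre kernel `p_t^α(x,y)`. -/
noncomputable def plKernel (d : ℕ) (α : Fin d → ℝ) (t : ℝ) (x y : Fin d → ℝ) : ℝ :=
  (1 / (2 * Real.sqrt π)) *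
    ∫ r in Set.Ioo (0 : ℝ) 1,
      (t * Real.exp (t ^ 2 / (4 * Real.log r)) /
          ((1 - r) ^ d * (-Real.log r) ^ ((3 : ℝ) / 2))) *
        (∏ j, (y j / x j) ^ (α j / 2) *
            Real.exp (-((r * x j + y j) / (1 - r)) - α j * Real.log r / 2) *
            besselI (α j) (2 * Real.sqrt (r * x j * y j) / (1 - r))) / r

/-- The Poisson–Laguerre semigroup `P_t^α f`, with the convention `P_0^α f = f`. -/
noncomputable def plP (d : ℕ) (α : Fin d → ℝ) (t : ℝ)
    (f : (Fin d → ℝ) → ℝ) (x : Fin d → ℝ) : ℝ :=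
  if t = 0 then f x else ∫ y in posOrthant d, plKernel d α t x y * f y

/-- The Laguerre fractional derivative `D_λ^α f` of order `λ`, defined via the
`k`-fold difference `(P_s^α - I)^k`. -/
noncomputable def laguerreFracDerivK (d : ℕ) (α : Fin d → ℝ) (lam : ℝ) (k : ℕ)
    (f : (Fin d → ℝ) → ℝ) (x : Fin d → ℝ) : ℝ :=
  (1 / ∫ u in Set.Ioi (0 : ℝ), u ^ (-lam - 1) * (Real.exp (-u) - 1) ^ k) *
    ∫ s in Set.Ioi (0 : ℝ), s ^ (-lam - 1) *
      ∑ j ∈ Finset.range (k + 1),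
        (k.choose j : ℝ) * (-1) ^ j * plP d α (((k - j : ℕ) : ℝ) * s) f x

open Filter Topology fwdDiff
open scoped ENNReal
open ProbabilityTheory (gammaPDF gammaPDFReal)

lemma abs_sub_le_sub_of_abs_deriv_le {g g' H H' : ℝ → ℝ} {a b : ℝ} (hab : a ≤ b)
    (hg : ∀ t ∈ Icc a b, HasDerivAt g (g' t) t) (hH : ∀ t ∈ Icc a b, HasDerivAt H (H' t) t)
    (hle : ∀ t ∈ Icc a b, |g' t| ≤ H' t) : |g b - g a| ≤ H b - H a := by
  have key := image_norm_le_of_norm_deriv_right_le_deriv_boundary' (E := ℝ)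
    (f := fun t => g t - g a) (f' := g') (a := a) (b := b) (B := fun t => H t - H a) (B' := H')
    (fun t ht => ((hg t ht).continuousAt.sub continuousAt_const).continuousWithinAt)
    (fun t ht => ((hg t (Ico_subset_Icc_self ht)).sub_const _).hasDerivWithinAt)
    (by simp)
    (fun t ht => ((hH t ht).continuousAt.sub continuousAt_const).continuousWithinAt)
    (fun t ht => ((hH t (Ico_subset_Icc_self ht)).sub_const _).hasDerivWithinAt)
    (fun t ht => hle t (Ico_subset_Icc_self ht))
  simpa using key (right_mem_Icc.2 hab)

lemma hasDerivAt_mul_rpow_div {B q t : ℝ} (hq : q ≠ 0) (ht : 0 < t) :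
    HasDerivAt (fun t : ℝ => B * t ^ q / q) (B * t ^ (q - 1)) t := by
  have := ((hasDerivAt_rpow_const (p := q) (Or.inl ht.ne')).const_mul B).div_const q
  have e : B * (q * t ^ (q - 1)) / q = B * t ^ (q - 1) := by field_simp
  rwa [e] at this

lemma abs_sub_le_of_abs_deriv_le_rpow {g g' : ℝ → ℝ} {B q a b : ℝ} (hq : q ≠ 0)
    (ha : 0 < a) (hab : a ≤ b)
    (hg : ∀ t > 0, HasDerivAt g (g' t) t) (hb : ∀ t > 0, |g' t| ≤ B * t ^ (q - 1)) :
    |g b - g a| ≤ B * b ^ q / q - B * a ^ q / q :=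
  abs_sub_le_sub_of_abs_deriv_le (H := fun t => B * t ^ q / q) hab
    (fun t ht => hg t (ha.trans_le ht.1))
    (fun _ ht => hasDerivAt_mul_rpow_div hq (ha.trans_le ht.1))
    (fun t ht => hb t (ha.trans_le ht.1))

lemma abs_le_of_abs_deriv_le_rpow {g g' : ℝ → ℝ} {B q : ℝ} (hq : q < 0)
    (hg : ∀ t > 0, HasDerivAt g (g' t) t) (hb : ∀ t > 0, |g' t| ≤ B * t ^ (q - 1))
    (hlim : Tendsto g atTop (𝓝 0)) {t : ℝ} (ht : 0 < t) : |g t| ≤ B / (-q) * t ^ q := by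
  have h1 : Tendsto (fun b => |g b - g t|) atTop (𝓝 |0 - g t|) :=
    (hlim.sub_const _).abs
  have h2 : Tendsto (fun b : ℝ => B * b ^ q / q - B * t ^ q / q) atTop
      (𝓝 (B * 0 / q - B * t ^ q / q)) := by
    have := tendsto_rpow_neg_atTop (y := -q) (by linarith)
    rw [neg_neg] at this
    exact ((this.const_mul B).div_const q).sub_const _
  have h3 := le_of_tendsto_of_tendsto h1 h2 (by
    filter_upwards [eventually_ge_atTop t] with b hb'
    exact abs_sub_le_of_abs_deriv_le_rpow hq.ne ht hb' hg hb)
  rw [zero_sub, abs_neg] at h3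
  refine h3.trans (le_of_eq ?_)
  have : q ≠ 0 := hq.ne
  field_simp
  ring

/-- Iterated forward differences are controlled by the sup of the function. -/
lemma abs_fwdDiff_iter_le {g : ℝ → ℝ} {B s t : ℝ} (m : ℕ) (hs : 0 ≤ s)
    (hb : ∀ τ ≥ t, |g τ| ≤ B) : |(Δ_[s])^[m] g t| ≤ 2 ^ m * B := by
  induction m generalizing t with
  | zero => simpa using hb t le_rfl
  | succ m ih =>
    rw [Function.iterate_succ_apply']
    have h1 := ih (t := t + s) (fun τ hτ => hb τ (by linarith))
    have h2 := ih hb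
    calc |(Δ_[s])^[m] g (t + s) - (Δ_[s])^[m] g t| ≤ _ := abs_sub _ _
      _ ≤ 2 ^ m * B + 2 ^ m * B := add_le_add h1 h2
      _ = _ := by ring

/-- Iterated forward differences are controlled by the sup of the derivative of the same order. -/
lemma abs_fwdDiff_iter_le_of_deriv {G : ℕ → ℝ → ℝ} {B s t : ℝ} (m : ℕ) (hs : 0 ≤ s) (ht : 0 < t)
    (hG : ∀ i, ∀ τ > 0, HasDerivAt (G i) (G (i + 1) τ) τ)
    (hb : ∀ τ ≥ t, |G m τ| ≤ B) : |(Δ_[s])^[m] (G 0) t| ≤ s ^ m * B := by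
  induction m generalizing G B with
  | zero => simpa using hb t le_rfl
  | succ m ih =>
    rw [Function.iterate_succ_apply]
    have := ih (G := fun i => Δ_[s] (G i)) (B := s * B) (fun i τ hτ => by
      have h1 := (hG i (τ + s) (by linarith)).comp_add_const τ s
      exact h1.sub (hG i τ hτ)) (fun τ hτ => by
      have := abs_sub_le_sub_of_abs_deriv_le (g := G m) (g' := G (m + 1)) (H := fun x => B * x)
        (H' := fun _ => B) (a := τ) (b := τ + s) (by linarith)
        (fun x hx => hG m x (by linarith [hx.1]))
        (fun x hx => by simpa using (hasDerivAt_id x).const_mul B)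
        (fun x hx => hb x (by linarith [hx.1]))
      refine this.trans (le_of_eq ?_)
      ring)
    refine this.trans (le_of_eq ?_)
    ring

lemma hasDerivAt_fwdDiff_iter {g g' : ℝ → ℝ} {s t : ℝ} (m : ℕ) (hs : 0 ≤ s) (ht : 0 < t)
    (hg : ∀ τ > 0, HasDerivAt g (g' τ) τ) :
    HasDerivAt ((Δ_[s])^[m] g) ((Δ_[s])^[m] g' t) t := by
  induction m generalizing t with
  | zero => simpa using hg t ht
  | succ m ih =>
    rw [Function.iterate_succ_apply', Function.iterate_succ_apply']
    exact ((ih (t := t + s) (by linarith)).comp_add_const t s).sub (ih ht)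

/-- Near the origin an iterated difference is controlled by the singularity of the derivative. -/
lemma abs_fwdDiff_iter_succ_le {G : ℕ → ℝ → ℝ} {B q s t : ℝ} (m : ℕ) (hs : 0 ≤ s) (ht : 0 < t)
    (hq : 0 < q) (hq1 : q ≤ 1) (hB : 0 ≤ B)
    (hG : ∀ i, ∀ τ > 0, HasDerivAt (G i) (G (i + 1) τ) τ)
    (hb : ∀ τ > 0, |G (m + 1) τ| ≤ B * τ ^ (q - 1)) :
    |(Δ_[s])^[m + 1] (G 0) t| ≤ s ^ m * B / q * (t + s) ^ q := by
  rw [Function.iterate_succ_apply']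
  have h := abs_sub_le_of_abs_deriv_le_rpow (g := (Δ_[s])^[m] (G 0)) (g' := (Δ_[s])^[m] (G 1))
    (B := s ^ m * B) hq.ne' ht (show t ≤ t + s by linarith)
    (fun τ hτ => hasDerivAt_fwdDiff_iter m hs hτ (hG 0))
    (fun τ hτ => by
      have := abs_fwdDiff_iter_le_of_deriv (G := fun i => G (i + 1)) (s := s) (t := τ)
        (B := B * τ ^ (q - 1)) m hs hτ
        (fun i => hG (i + 1)) (fun x hx => (hb x (hτ.trans_le hx)).trans
          (mul_le_mul_of_nonneg_left (rpow_le_rpow_of_nonpos hτ hx (by linarith)) hB))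
      simpa [mul_assoc] using this)
  refine h.trans ?_
  have : 0 ≤ s ^ m * B * t ^ q / q := by positivity
  calc _ ≤ s ^ m * B * (t + s) ^ q / q := by linarith
    _ = _ := by ring

/-- Integrability and size of `∫ s^{-λ-1} F(s) ds` when `F` is small near `0` and bounded. -/
lemma integrableOn_rpow_mul_and_abs_integral_le {F : ℝ → ℝ} {lam p a b T : ℝ} (hlam : 0 < lam)
    (hp : lam < p) (hT : 0 < T)
    (hF : AEStronglyMeasurable F (volume.restrict (Ioi 0)))
    (ha : ∀ s, 0 < s → s ≤ T → |F s| ≤ a * s ^ p) (hb : ∀ s, T < s → |F s| ≤ b) :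
    IntegrableOn (fun s => s ^ (-lam - 1) * F s) (Ioi 0) ∧
      |∫ s in Ioi 0, s ^ (-lam - 1) * F s| ≤
        a * (T ^ (p - lam) / (p - lam)) + b * (T ^ (-lam) / lam) := by
  have hm : ∀ s : Set ℝ, s ⊆ Ioi 0 → AEStronglyMeasurable (fun s => s ^ (-lam - 1) * F s)
      (volume.restrict s) := fun s hs =>
    ((measurable_id.pow_const _).aestronglyMeasurable).mul (hF.mono_measure
      (Measure.restrict_mono hs le_rfl))
  have i1 : IntegrableOn (fun s : ℝ => a * s ^ (p - lam - 1)) (Ioc 0 T) := by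
    have := (intervalIntegral.intervalIntegrable_rpow' (a := 0) (b := T) (r := p - lam - 1)
      (by linarith))
    rw [intervalIntegrable_iff_integrableOn_Ioc_of_le hT.le] at this
    exact this.const_mul a
  have i2 : IntegrableOn (fun s : ℝ => b * s ^ (-lam - 1)) (Ioi T) :=
    (integrableOn_Ioi_rpow_of_lt (by linarith) hT).const_mul b
  have b1 : ∀ s ∈ Ioc 0 T, ‖s ^ (-lam - 1) * F s‖ ≤ a * s ^ (p - lam - 1) := fun s hs => by
    rw [norm_mul, Real.norm_eq_abs, Real.norm_eq_abs, abs_of_nonneg (rpow_nonneg hs.1.le _)]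
    calc _ ≤ s ^ (-lam - 1) * (a * s ^ p) :=
          mul_le_mul_of_nonneg_left (ha s hs.1 hs.2) (rpow_nonneg hs.1.le _)
      _ = _ := by
          rw [show p - lam - 1 = (-lam - 1) + p by ring, rpow_add hs.1]; ring
  have b2 : ∀ s ∈ Ioi T, ‖s ^ (-lam - 1) * F s‖ ≤ b * s ^ (-lam - 1) := fun s hs => by
    have hs0 : 0 < s := hT.trans hs
    rw [norm_mul, Real.norm_eq_abs, Real.norm_eq_abs, abs_of_nonneg (rpow_nonneg hs0.le _),
      mul_comm]
    exact mul_le_mul_of_nonneg_right (hb s hs) (rpow_nonneg hs0.le _)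
  have j1 : IntegrableOn (fun s => s ^ (-lam - 1) * F s) (Ioc 0 T) :=
    i1.mono' (hm _ Ioc_subset_Ioi_self)
      ((ae_restrict_iff' measurableSet_Ioc).2 (Eventually.of_forall b1))
  have j2 : IntegrableOn (fun s => s ^ (-lam - 1) * F s) (Ioi T) :=
    i2.mono' (hm _ (Ioi_subset_Ioi hT.le))
      ((ae_restrict_iff' measurableSet_Ioi).2 (Eventually.of_forall b2))
  have hU : Ioc 0 T ∪ Ioi T = Ioi 0 := Ioc_union_Ioi_eq_Ioi hT.le
  refine ⟨hU ▸ j1.union j2, ?_⟩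
  rw [← hU, setIntegral_union (Ioc_disjoint_Ioi le_rfl) measurableSet_Ioi j1 j2]
  refine (abs_add_le _ _).trans (add_le_add ?_ ?_)
  · refine (norm_integral_le_of_norm_le i1
      ((ae_restrict_iff' measurableSet_Ioc).2 (Eventually.of_forall b1))).trans (le_of_eq ?_)
    rw [integral_const_mul, ← intervalIntegral.integral_of_le hT.le,
      integral_rpow (Or.inl (by linarith)), sub_add_cancel, zero_rpow (by linarith), sub_zero]
  · refine (norm_integral_le_of_norm_le i2
      ((ae_restrict_iff' measurableSet_Ioi).2 (Eventually.of_forall b2))).trans (le_of_eq ?_)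
    rw [integral_const_mul, integral_Ioi_rpow_of_lt (by linarith) hT, sub_add_cancel,
      neg_div_neg_eq]

/-- A function with a nonzero limit at `0+` is not integrable against `s^{-λ-1}`. -/
lemma not_integrableOn_rpow_mul {F : ℝ → ℝ} {lam c : ℝ} (hlam : 0 < lam) (hc : c ≠ 0)
    (hF : Tendsto F (𝓝[>] 0) (𝓝 c)) :
    ¬ IntegrableOn (fun s => s ^ (-lam - 1) * F s) (Ioi 0) := by
  intro hi
  have hc' : 0 < |c| := abs_pos.2 hc
  have h1 : ∀ᶠ s in 𝓝[>] (0 : ℝ), |c| / 2 < |F s| :=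
    hF.abs.eventually (lt_mem_nhds (by linarith))
  obtain ⟨δ, hδ, h2⟩ := mem_nhdsGT_iff_exists_Ioo_subset.1 h1
  have h3 : IntegrableOn (fun s : ℝ => s ^ (-lam - 1)) (Ioo 0 δ) := by
    refine Integrable.mono' (((hi.mono_set (Ioo_subset_Ioi_self)).norm).const_mul (2 / |c|))
      (measurable_id.pow_const _).aestronglyMeasurable
      ((ae_restrict_iff' measurableSet_Ioo).2 (Eventually.of_forall fun s hs => ?_))
    have hp : 0 ≤ s ^ (-lam - 1) := rpow_nonneg hs.1.le _
    rw [norm_mul, Real.norm_eq_abs, Real.norm_eq_abs, abs_of_nonneg hp]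
    have : |c| / 2 < |F s| := h2 hs
    calc s ^ (-lam - 1) = 2 / |c| * (s ^ (-lam - 1) * (|c| / 2)) := by field_simp
      _ ≤ _ := by gcongr
  rw [intervalIntegral.integrableOn_Ioo_rpow_iff hδ] at h3
  linarith

/-- A family of probability kernels forming a semigroup, with the smoothing estimate
`|∂_t P_t f| ≤ C ‖f‖ / t`. -/
structure IsAnalyticFlow {E : Type*} [MeasurableSpace E] (P : ℝ → E → Measure E) (C : ℝ) :
    Prop where
  prob : ∀ t > 0, ∀ x, IsProbabilityMeasure (P t x)
  meas : ∀ f : E → ℝ, Measurable f → Measurable fun p : ℝ × E => ∫ z, f z ∂P p.1 p.2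
  comp : ∀ (f : E → ℝ) (M : ℝ), Measurable f → (∀ z, |f z| ≤ M) → ∀ s > 0, ∀ t > 0, ∀ x,
    ∫ y, (∫ z, f z ∂P t y) ∂P s x = ∫ z, f z ∂P (s + t) x
  nonneg : 0 ≤ C
  deriv : ∀ (f : E → ℝ) (M : ℝ), Measurable f → (∀ z, |f z| ≤ M) → ∀ t > 0, ∀ x,
    DifferentiableAt ℝ (fun τ => ∫ z, f z ∂P τ x) t ∧
      |_root_.deriv (fun τ => ∫ z, f z ∂P τ x) t| ≤ C * M / t

/-- An orbit `t ↦ v t` of the semigroup, i.e. `v (s + t) = P_s (v t)`. -/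
structure IsOrbit {E : Type*} [MeasurableSpace E] (P : ℝ → E → Measure E) (v : ℝ → E → ℝ) :
    Prop where
  meas : ∀ t > 0, Measurable (v t)
  shift : ∀ s > 0, ∀ t > 0, ∀ x, v (s + t) x = ∫ y, v t y ∂P s x

section Flow

variable {E : Type*} [MeasurableSpace E] {P : ℝ → E → Measure E} {C : ℝ}

lemma IsAnalyticFlow.abs_integral_le (h : IsAnalyticFlow P C) {f : E → ℝ} {M : ℝ}
    (hM : ∀ z, |f z| ≤ M) {t : ℝ} (ht : 0 < t) (x : E) : |∫ z, f z ∂P t x| ≤ M := by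
  have := h.prob t ht x
  simpa using norm_integral_le_of_norm_le_const (μ := P t x) (f := f) (C := M)
    (Eventually.of_forall hM)

lemma IsAnalyticFlow.isOrbit (h : IsAnalyticFlow P C) {f : E → ℝ} {M : ℝ} (hf : Measurable f)
    (hM : ∀ z, |f z| ≤ M) : IsOrbit P (fun t x => ∫ z, f z ∂P t x) where
  meas _ _ := (h.meas f hf).comp measurable_prodMk_left
  shift s hs t ht x := (h.comp f M hf hM s hs t ht x).symm

lemma IsOrbit.deriv_bound (h : IsAnalyticFlow P C) {v : ℝ → E → ℝ} (hv : IsOrbit P v) {B p : ℝ}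
    (hB : ∀ t > 0, ∀ x, |v t x| ≤ B * t ^ p) {t : ℝ} (ht : 0 < t) (x : E) :
    HasDerivAt (fun τ => v τ x) (deriv (fun τ => v τ x) t) t ∧
      |deriv (fun τ => v τ x) t| ≤ C * 2 ^ (1 - p) * B * t ^ (p - 1) := by
  have ht2 : 0 < t / 2 := by linarith
  have hd := h.deriv (v (t / 2)) (B * (t / 2) ^ p) (hv.meas _ ht2) (hB _ ht2) (t / 2) ht2 x
  have e : (fun τ => v τ x) =ᶠ[𝓝 t] fun τ => ∫ z, v (t / 2) z ∂P (τ - t / 2) x := by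
    filter_upwards [lt_mem_nhds (show t / 2 < t by linarith)] with τ hτ
    rw [← hv.shift _ (by linarith) _ ht2, sub_add_cancel]
  have h1 : HasDerivAt (fun τ => ∫ z, v (t / 2) z ∂P τ x)
      (deriv (fun τ => ∫ z, v (t / 2) z ∂P τ x) (t / 2)) (t - t / 2) := by
    rw [show t - t / 2 = t / 2 by ring]; exact hd.1.hasDerivAt
  have h2 := (h1.comp_sub_const t (t / 2)).congr_of_eventuallyEq e
  rw [h2.deriv]
  refine ⟨h2, hd.2.trans (le_of_eq ?_)⟩
  rw [div_rpow ht.le (by norm_num), rpow_sub_one ht.ne', rpow_sub (by norm_num), rpow_one]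
  field_simp

lemma IsOrbit.measurable_deriv (h : IsAnalyticFlow P C) {v : ℝ → E → ℝ} (hv : IsOrbit P v)
    {B p : ℝ} (hB : ∀ t > 0, ∀ x, |v t x| ≤ B * t ^ p) {t : ℝ} (ht : 0 < t) :
    Measurable fun x => deriv (fun τ => v τ x) t := by
  refine measurable_of_tendsto_metrizable
    (f := fun (n : ℕ) x => (1 / ((n : ℝ) + 1))⁻¹ • (v (t + 1 / ((n : ℝ) + 1)) x - v t x))
    (fun n => ((hv.meas (t + 1 / ((n : ℝ) + 1))
      (add_pos ht Nat.one_div_pos_of_nat)).sub (hv.meas _ ht)).const_smul (1 / ((n : ℝ) + 1))⁻¹) ?_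
  rw [tendsto_pi_nhds]
  intro x
  have h1 := (hv.deriv_bound h hB ht x).1
  rw [hasDerivAt_iff_tendsto_slope_zero] at h1
  refine h1.comp (tendsto_nhdsWithin_iff.2 ⟨tendsto_one_div_add_atTop_nhds_zero_nat, ?_⟩)
  exact Eventually.of_forall fun n => by
    simp only [mem_compl_iff, mem_singleton_iff]; positivity

lemma IsOrbit.deriv (h : IsAnalyticFlow P C) {v : ℝ → E → ℝ} (hv : IsOrbit P v) {B p : ℝ}
    (hp : p ≤ 0) (hB0 : 0 ≤ B)
    (hB : ∀ t > 0, ∀ x, |v t x| ≤ B * t ^ p) :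
    IsOrbit P (fun t x => deriv (fun τ => v τ x) t) where
  meas t ht := hv.measurable_deriv h hB ht
  shift s hs t ht x := by
    have := h.prob s hs x
    have ht2 : 0 < t / 2 := by linarith
    have hd := (hv.deriv_bound h hB (show 0 < s + t by linarith) x).1
    have hK : 0 ≤ C * 2 ^ (1 - p) * B := by
      have := h.nonneg
      positivity
    have key := hasDerivAt_integral_of_dominated_loc_of_deriv_le (μ := P s x)
      (F := fun τ y => v τ y) (F' := fun τ y => _root_.deriv (fun τ => v τ y) τ) (x₀ := t)
      (s := Ioi (t / 2)) (bound := fun _ => C * 2 ^ (1 - p) * B * (t / 2) ^ (p - 1))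
      (Ioi_mem_nhds (by linarith))
      (by filter_upwards [lt_mem_nhds ht] with τ hτ using (hv.meas τ hτ).aestronglyMeasurable)
      (Integrable.of_bound (hv.meas t ht).aestronglyMeasurable _ (Eventually.of_forall (hB t ht)))
      (hv.measurable_deriv h hB ht).aestronglyMeasurable
      (Eventually.of_forall fun y τ hτ => by
        have hτ0 : 0 < τ := ht2.trans hτ
        refine (hv.deriv_bound h hB hτ0 y).2.trans (mul_le_mul_of_nonneg_left ?_ hK)
        exact rpow_le_rpow_of_nonpos ht2 (le_of_lt hτ) (by linarith))
      (integrable_const _)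
      (Eventually.of_forall fun y τ hτ => (hv.deriv_bound h hB (ht2.trans hτ) y).1)
    have e : (fun τ => v (s + τ) x) =ᶠ[𝓝 t] fun τ => ∫ y, v τ y ∂P s x := by
      filter_upwards [lt_mem_nhds ht] with τ hτ using hv.shift s hs τ hτ x
    exact (hd.comp_const_add s t).unique (key.2.congr_of_eventuallyEq e)

/-- Iterated time derivatives of an orbit, with polynomial bounds. -/
lemma IsOrbit.iteratedDeriv (h : IsAnalyticFlow P C) (p : ℝ) (hp : p ≤ 0) (m : ℕ) :
    ∃ K ≥ 0, ∀ (v : ℝ → E → ℝ) (B : ℝ), IsOrbit P v → 0 ≤ B →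
      (∀ t > 0, ∀ x, |v t x| ≤ B * t ^ p) →
      IsOrbit P (fun t x => iteratedDeriv m (fun τ => v τ x) t) ∧
      ∀ t > 0, ∀ x, |_root_.iteratedDeriv m (fun τ => v τ x) t| ≤ K * B * t ^ (p - m) ∧
        HasDerivAt (_root_.iteratedDeriv m (fun τ => v τ x))
          (_root_.iteratedDeriv (m + 1) (fun τ => v τ x) t) t := by
  induction m with
  | zero =>
    refine ⟨1, zero_le_one, fun v B hv hB0 hB => ⟨?_, fun t ht x => ⟨?_, ?_⟩⟩⟩
    · simpa using hv
    · simpa using hB t ht x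
    · simpa [iteratedDeriv_one] using (hv.deriv_bound h hB ht x).1
  | succ m ih =>
    obtain ⟨K, hK, hih⟩ := ih
    refine ⟨C * 2 ^ (1 - (p - m)) * K, by have := h.nonneg; positivity,
      fun v B hv hB0 hB => ?_⟩
    obtain ⟨h1, h2⟩ := hih v B hv hB0 hB
    have hm : (0 : ℝ) ≤ m := Nat.cast_nonneg m
    have hb : ∀ t > 0, ∀ x, |_root_.iteratedDeriv m (fun τ => v τ x) t| ≤ K * B * t ^ (p - m) :=
      fun t ht x => (h2 t ht x).1
    have h3 := h1.deriv h (by linarith) (by positivity) hb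
    have h4 : ∀ t > 0, ∀ x, |_root_.iteratedDeriv (m + 1) (fun τ => v τ x) t| ≤
        C * 2 ^ (1 - (p - m)) * (K * B) * t ^ (p - m - 1) := fun t ht x => by
      rw [iteratedDeriv_succ]; exact (h1.deriv_bound h hb ht x).2
    simp_rw [← iteratedDeriv_succ] at h3
    refine ⟨h3, fun t ht x => ⟨?_, ?_⟩⟩
    · refine (h4 t ht x).trans (le_of_eq ?_)
      rw [show p - ((m + 1 : ℕ) : ℝ) = p - m - 1 by push_cast; ring]; ring
    · rw [iteratedDeriv_succ (n := m + 1)]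
      exact (h3.deriv_bound h h4 ht x).1

/-- An orbit bounded on a set of full measure is bounded everywhere, at the cost of a constant. -/
lemma IsOrbit.bound_of_ae (h : IsAnalyticFlow P C) {v : ℝ → E → ℝ} (hv : IsOrbit P v)
    {O : Set E} (hO : ∀ t > 0, ∀ x, ∀ᵐ y ∂P t x, y ∈ O) {B p : ℝ}
    (hB : ∀ t > 0, ∀ x ∈ O, |v t x| ≤ B * t ^ p) :
    ∀ t > 0, ∀ x, |v t x| ≤ B * 2 ^ (-p) * t ^ p := by
  intro t ht x
  have ht2 : 0 < t / 2 := by linarith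
  have := h.prob _ ht2 x
  have e := hv.shift _ ht2 _ ht2 x
  rw [add_halves] at e
  rw [e]
  have := norm_integral_le_of_norm_le_const (μ := P (t / 2) x) (f := v (t / 2))
    (C := B * (t / 2) ^ p) (by filter_upwards [hO _ ht2 x] with y hy using hB _ ht2 y hy)
  simp only [probReal_univ, mul_one, Real.norm_eq_abs] at this
  refine this.trans (le_of_eq ?_)
  rw [div_rpow ht.le (by norm_num), rpow_neg (by norm_num)]
  ring

end Flow

lemma exists_const_abs_deriv_le_rpow (γ : ℝ) (m : ℕ) (hm : 1 ≤ m) (hγ : γ < m) (i : ℕ) :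
    ∃ c ≥ 0, ∀ (G : ℕ → ℝ → ℝ) (B : ℝ), (∀ j, ∀ τ > 0, HasDerivAt (G j) (G (j + 1) τ) τ) →
      (∀ j ≥ 1, Tendsto (G j) atTop (𝓝 0)) →
      (∀ t > 0, |G (m + i) t| ≤ B * t ^ (γ - (m + i : ℕ))) →
      ∀ t > 0, |G m t| ≤ c * B * t ^ (γ - m) := by
  induction i with
  | zero => exact ⟨1, zero_le_one, fun G B _ _ hb t ht => by simpa using hb t ht⟩
  | succ i ih =>
    obtain ⟨c, hc, ih⟩ := ih
    have hi : (0 : ℝ) ≤ i := Nat.cast_nonneg i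
    have hq : γ - (m + i : ℕ) < 0 := by push_cast; linarith
    refine ⟨c / (-(γ - (m + i : ℕ))), div_nonneg hc (by linarith),
      fun G B hG hlim hb t ht => ?_⟩
    have := ih G (B / (-(γ - (m + i : ℕ)))) hG hlim (fun t ht =>
      abs_le_of_abs_deriv_le_rpow (g := G (m + i)) hq (hG (m + i)) (fun τ hτ => by
        have := hb τ hτ
        rwa [show γ - ((m + (i + 1) : ℕ) : ℝ) = γ - (m + i : ℕ) - 1 by push_cast; ring] at this)
        (hlim _ (by omega)) ht) t ht
    refine this.trans (le_of_eq ?_)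
    ring

lemma exists_tendsto_nhdsGT_zero {g g' : ℝ → ℝ} {B q : ℝ} (hq : 0 < q)
    (hg : ∀ t > 0, HasDerivAt g (g' t) t) (hb : ∀ t > 0, |g' t| ≤ B * t ^ (q - 1)) :
    ∃ l, Tendsto g (𝓝[>] 0) (𝓝 l) := by
  rw [← cauchy_map_iff_exists_tendsto, Metric.cauchy_iff]
  refine ⟨inferInstance, fun ε hε => ?_⟩
  have hlim : Tendsto (fun t : ℝ => B * t ^ q / q) (𝓝[>] 0) (𝓝 0) := by
    have : ContinuousAt (fun t : ℝ => B * t ^ q / q) 0 :=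
      (continuousAt_const.mul (continuousAt_rpow_const 0 q (Or.inr hq.le))).div_const q
    have h0 := this.tendsto
    simp only [zero_rpow hq.ne', mul_zero, zero_div] at h0
    exact h0.mono_left nhdsWithin_le_nhds
  have hev : ∀ᶠ t : ℝ in 𝓝[>] 0, |B * t ^ q / q| < ε / 2 := by
    have := hlim.abs
    rw [abs_zero] at this
    exact this.eventually (gt_mem_nhds (by linarith))
  refine ⟨g '' {t | 0 < t ∧ |B * t ^ q / q| < ε / 2}, image_mem_map ?_, ?_⟩
  · filter_upwards [hev, self_mem_nhdsWithin] with t h1 h2 using ⟨h2, h1⟩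
  · rintro _ ⟨a, ⟨ha0, ha⟩, rfl⟩ _ ⟨b, ⟨hb0, hb'⟩, rfl⟩
    wlog hab : a ≤ b generalizing a b
    · rw [dist_comm]; exact this b hb0 hb' a ha0 ha (le_of_not_ge hab)
    have := abs_sub_le_of_abs_deriv_le_rpow hq.ne' ha0 hab hg hb
    rw [dist_comm, Real.dist_eq]
    rw [abs_lt] at ha hb'
    linarith

/-- Change the value of a function at the origin. -/
noncomputable def setAtZero (a : ℝ) (g : ℝ → ℝ) (t : ℝ) : ℝ := if t = 0 then a else g t

lemma setAtZero_of_pos (a : ℝ) (g : ℝ → ℝ) {t : ℝ} (ht : 0 < t) : setAtZero a g t = g t :=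
  if_neg ht.ne'

lemma fwdDiff_iter_eq_sum_real (g : ℝ → ℝ) (k : ℕ) (s t : ℝ) :
    (Δ_[s])^[k] g t = ∑ i ∈ Finset.range (k + 1),
      ((-1 : ℝ) ^ (k - i) * k.choose i) * g (t + i * s) := by
  rw [fwdDiff_iter_eq_sum_shift]
  refine Finset.sum_congr rfl fun i _ => ?_
  rw [zsmul_eq_mul, nsmul_eq_mul]
  push_cast
  rfl

lemma fwdDiff_iter_eq_sum_choose (g : ℝ → ℝ) (k : ℕ) (s : ℝ) :
    (Δ_[s])^[k] g 0 = ∑ j ∈ Finset.range (k + 1),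
      (k.choose j : ℝ) * (-1) ^ j * g (((k - j : ℕ) : ℝ) * s) := by
  rw [fwdDiff_iter_eq_sum_real, ← Finset.sum_range_reflect]
  refine Finset.sum_congr rfl fun j hj => ?_
  have hj' : j ≤ k := Nat.lt_succ_iff.1 (Finset.mem_range.1 hj)
  rw [show k + 1 - 1 - j = k - j by omega, Nat.sub_sub_self hj', Nat.choose_symm hj', zero_add]
  ring

lemma tendsto_fwdDiff_iter_setAtZero {g : ℝ → ℝ} {l s : ℝ} (k : ℕ) (hs : 0 < s)
    (hg : ContinuousOn g (Ioi 0)) (hl : Tendsto g (𝓝[>] 0) (𝓝 l)) :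
    Tendsto (fun ε => (Δ_[s])^[k] g ε) (𝓝[>] 0) (𝓝 ((Δ_[s])^[k] (setAtZero l g) 0)) := by
  simp_rw [fwdDiff_iter_eq_sum_real]
  refine tendsto_finsetSum _ fun i _ => Tendsto.const_mul _ ?_
  rcases Nat.eq_zero_or_pos i with rfl | hi
  · simpa [setAtZero] using hl
  · have hpos : 0 < (i : ℝ) * s := by positivity
    rw [zero_add, setAtZero_of_pos _ _ hpos]
    have hc : ContinuousAt g ((0 : ℝ) + i * s) := by
      rw [zero_add]; exact hg.continuousAt (Ioi_mem_nhds hpos)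
    have h2 : ContinuousAt (fun ε : ℝ => g (ε + i * s)) 0 :=
      ContinuousAt.comp (g := g) (f := fun ε : ℝ => ε + i * s) hc
        (continuousAt_id.add continuousAt_const)
    have := h2.tendsto
    rw [zero_add] at this
    exact this.mono_left nhdsWithin_le_nhds

lemma abs_fwdDiff_iter_setAtZero_le {G : ℕ → ℝ → ℝ} {B q s l : ℝ} (m : ℕ) (hs : 0 < s)
    (hq : 0 < q) (hq1 : q ≤ 1) (hB : 0 ≤ B)
    (hG : ∀ i, ∀ τ > 0, HasDerivAt (G i) (G (i + 1) τ) τ)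
    (hl : Tendsto (G 0) (𝓝[>] 0) (𝓝 l))
    (hb : ∀ τ > 0, |G (m + 1) τ| ≤ B * τ ^ (q - 1)) :
    |(Δ_[s])^[m + 1] (setAtZero l (G 0)) 0| ≤ B / q * s ^ (m + q) := by
  have h1 := tendsto_fwdDiff_iter_setAtZero (m + 1) hs
    (fun t ht => (hG 0 t ht).continuousAt.continuousWithinAt) hl
  have h2 : Tendsto (fun t : ℝ => s ^ m * B / q * (t + s) ^ q) (𝓝[>] 0)
      (𝓝 (s ^ m * B / q * (0 + s) ^ q)) := by
    have : ContinuousAt (fun t : ℝ => s ^ m * B / q * (t + s) ^ q) 0 :=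
      continuousAt_const.mul ((continuousAt_id.add continuousAt_const).rpow_const (Or.inr hq.le))
    exact this.tendsto.mono_left nhdsWithin_le_nhds
  have h3 := le_of_tendsto_of_tendsto h1.abs h2 (by
    filter_upwards [self_mem_nhdsWithin] with t ht
    exact abs_fwdDiff_iter_succ_le m hs.le ht hq hq1 hB hG hb)
  refine h3.trans (le_of_eq ?_)
  rw [rpow_add hs, rpow_natCast, zero_add]
  ring

lemma fwdDiff_iter_setAtZero_sub (g : ℝ → ℝ) (k : ℕ) (a l : ℝ) {s : ℝ} (hs : 0 < s) :
    (Δ_[s])^[k] (setAtZero a g) 0 = (Δ_[s])^[k] (setAtZero l g) 0 + (-1) ^ k * (a - l) := by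
  rw [fwdDiff_iter_eq_sum_real, fwdDiff_iter_eq_sum_real, Finset.sum_range_succ',
    Finset.sum_range_succ']
  have : ∀ i ∈ Finset.range k, ((-1 : ℝ) ^ (k - (i + 1)) * k.choose (i + 1)) *
      setAtZero a g (0 + ((i + 1 : ℕ) : ℝ) * s) = ((-1 : ℝ) ^ (k - (i + 1)) * k.choose (i + 1)) *
      setAtZero l g (0 + ((i + 1 : ℕ) : ℝ) * s) := fun i _ => by
    have hpos : 0 < 0 + ((i + 1 : ℕ) : ℝ) * s := by positivity
    rw [setAtZero_of_pos _ _ hpos, setAtZero_of_pos _ _ hpos]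
  rw [Finset.sum_congr rfl this]
  simp [setAtZero]
  ring

lemma continuousOn_fwdDiff_iter {g : ℝ → ℝ} (k : ℕ) {t : ℝ} (ht : 0 < t)
    (hg : ContinuousOn g (Ioi 0)) : ContinuousOn (fun s => (Δ_[s])^[k] g t) (Ioi 0) := by
  simp_rw [fwdDiff_iter_eq_sum_real]
  refine continuousOn_finsetSum _ fun i _ => continuousOn_const.mul ?_
  refine hg.comp (by fun_prop) fun s hs => ?_
  have : (0 : ℝ) < s := hs
  simp only [mem_Ioi]; positivity

lemma continuousOn_fwdDiff_iter_setAtZero {g : ℝ → ℝ} (k : ℕ) (a : ℝ)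
    (hg : ContinuousOn g (Ioi 0)) :
    ContinuousOn (fun s => (Δ_[s])^[k] (setAtZero a g) 0) (Ioi 0) := by
  simp_rw [fwdDiff_iter_eq_sum_real]
  refine continuousOn_finsetSum _ fun i _ => continuousOn_const.mul ?_
  rcases Nat.eq_zero_or_pos i with rfl | hi
  · simpa using continuousOn_const
  · have h2 : ∀ s ∈ Ioi (0 : ℝ), 0 < 0 + (i : ℝ) * s := fun s hs => by
      have : (0 : ℝ) < s := hs
      positivity
    refine (hg.comp (f := fun s => 0 + (i : ℝ) * s) (by fun_prop) h2).congr fun s hs => ?_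
    exact setAtZero_of_pos _ _ (h2 s hs)

lemma iteratedDeriv_eq_of_hasDerivAt {G : ℕ → ℝ → ℝ} {g : ℝ → ℝ}
    (hG : ∀ i, ∀ τ > 0, HasDerivAt (G i) (G (i + 1) τ) τ) (hg : ∀ t > 0, g t = G 0 t) (m : ℕ) :
    ∀ t > 0, iteratedDeriv m g t = G m t := by
  induction m with
  | zero => simpa using hg
  | succ m ih =>
    intro t ht
    rw [iteratedDeriv_succ]
    have : iteratedDeriv m g =ᶠ[𝓝 t] G m := by
      filter_upwards [lt_mem_nhds ht] with τ hτ using ih τ hτ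
    rw [this.deriv_eq, (hG m t ht).deriv]

/-- Differentiation of `∫ s^{-λ-1} Δ_s^k g(t) ds` under the integral sign. -/
lemma hasDerivAt_integral_fwdDiff {G : ℕ → ℝ → ℝ} {lam : ℝ} {k : ℕ} (hlam : 0 < lam)
    (hk : lam < k) (hG : ∀ i, ∀ τ > 0, HasDerivAt (G i) (G (i + 1) τ) τ)
    (hb : ∀ i, ∃ B ≥ 0, ∀ t > 0, |G i t| ≤ B * t ^ (-(i : ℝ))) (i : ℕ) {t : ℝ} (ht : 0 < t) :
    HasDerivAt (fun τ => ∫ s in Ioi 0, s ^ (-lam - 1) * (Δ_[s])^[k] (G i) τ)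
      (∫ s in Ioi 0, s ^ (-lam - 1) * (Δ_[s])^[k] (G (i + 1)) t) t := by
  have hcont : ∀ i, ContinuousOn (G i) (Ioi 0) := fun i t ht =>
    (hG i t ht).continuousAt.continuousWithinAt
  have hmeas : ∀ i, ∀ τ > 0, AEStronglyMeasurable (fun s => (Δ_[s])^[k] (G i) τ)
      (volume.restrict (Ioi 0)) := fun i τ hτ =>
    (continuousOn_fwdDiff_iter k hτ (hcont i)).aestronglyMeasurable measurableSet_Ioi
  have hpow : AEStronglyMeasurable (fun s : ℝ => s ^ (-lam - 1)) (volume.restrict (Ioi 0)) :=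
    (measurable_id.pow_const _).aestronglyMeasurable
  have hbd : ∀ i, ∀ t > 0, ∃ B ≥ 0, ∀ τ ≥ t, |G i τ| ≤ B := fun i t ht => by
    obtain ⟨B, hB, h⟩ := hb i
    refine ⟨B * t ^ (-(i : ℝ)), by positivity, fun τ hτ => (h τ (ht.trans_le hτ)).trans ?_⟩
    exact mul_le_mul_of_nonneg_left (rpow_le_rpow_of_nonpos ht hτ (by simp)) hB
  have ht2 : 0 < t / 2 := by linarith
  have hdom : ∀ i, ∃ a b : ℝ, (0 ≤ a ∧ 0 ≤ b) ∧ ∀ τ ≥ t / 2, ∀ s > 0,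
      |(Δ_[s])^[k] (G i) τ| ≤ a * s ^ (k : ℝ) ∧ |(Δ_[s])^[k] (G i) τ| ≤ b := fun i => by
    obtain ⟨a, ha0, ha⟩ := hbd (i + k) _ ht2
    obtain ⟨b, hb0, hb⟩ := hbd i _ ht2
    refine ⟨a, 2 ^ k * b, ⟨ha0, by positivity⟩, fun τ hτ s hs => ⟨?_, ?_⟩⟩
    · have := abs_fwdDiff_iter_le_of_deriv (G := fun j => G (i + j)) (B := a) (s := s) (t := τ) k
        hs.le (ht2.trans_le hτ) (fun j => hG (i + j)) (fun x hx => ha x (le_trans hτ hx))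
      rw [rpow_natCast, mul_comm]
      simpa using this
    · exact abs_fwdDiff_iter_le k hs.le (fun x hx => hb x (le_trans hτ hx))
  obtain ⟨a, b, ⟨ha0, hb0⟩, hab⟩ := hdom (i + 1)
  obtain ⟨a', b', -, hab'⟩ := hdom i
  have hdomint := (integrableOn_rpow_mul_and_abs_integral_le (lam := lam) (p := k) (a := a) (b := b)
    (T := 1) (F := fun s => min (a * s ^ (k : ℝ)) b) hlam hk one_pos
    (by
      refine Measurable.aestronglyMeasurable ?_
      exact ((measurable_id.pow_const _).const_mul a).min measurable_const)
    (fun s hs _ => by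
      rw [abs_of_nonneg (le_min (by positivity) hb0)]; exact min_le_left _ _)
    (fun s hs => by
      have : 0 < s := one_pos.trans hs
      rw [abs_of_nonneg (le_min (by positivity) hb0)]; exact min_le_right _ _)).1
  refine (hasDerivAt_integral_of_dominated_loc_of_deriv_le (μ := volume.restrict (Ioi 0))
    (F := fun τ s => s ^ (-lam - 1) * (Δ_[s])^[k] (G i) τ)
    (F' := fun τ s => s ^ (-lam - 1) * (Δ_[s])^[k] (G (i + 1)) τ)
    (s := Ioi (t / 2)) (bound := fun s => s ^ (-lam - 1) * min (a * s ^ (k : ℝ)) b)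
    (Ioi_mem_nhds (by linarith)) ?_ ?_ ?_ ?_ hdomint ?_).2
  · filter_upwards [lt_mem_nhds ht] with τ hτ using hpow.mul (hmeas i τ hτ)
  · exact (integrableOn_rpow_mul_and_abs_integral_le (T := 1) hlam hk one_pos (hmeas i t ht)
      (fun s hs _ => (hab' t (by linarith) s hs).1)
      (fun s hs => (hab' t (by linarith) s (one_pos.trans hs)).2)).1
  · exact hpow.mul (hmeas (i + 1) t ht)
  · refine (ae_restrict_iff' measurableSet_Ioi).2 (Eventually.of_forall fun s hs τ hτ => ?_)
    have hs0 : (0 : ℝ) < s := hs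
    rw [norm_mul, Real.norm_eq_abs, Real.norm_eq_abs, abs_of_nonneg (rpow_nonneg hs0.le _)]
    have := hab τ (le_of_lt hτ) s hs0
    exact mul_le_mul_of_nonneg_left (le_min this.1 this.2) (rpow_nonneg hs0.le _)
  · refine (ae_restrict_iff' measurableSet_Ioi).2 (Eventually.of_forall fun s hs τ hτ => ?_)
    exact (hasDerivAt_fwdDiff_iter k (le_of_lt hs) (ht2.trans hτ) (hG i)).const_mul _

section Flow

variable {E : Type*} [MeasurableSpace E] {P : ℝ → E → Measure E} {C : ℝ}

/-- The unnormalised fractional derivative `∫ s^{-λ-1} (P_s - I)^k f ds`. -/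
noncomputable def fracInt (P : ℝ → E → Measure E) (lam : ℝ) (k : ℕ) (f : E → ℝ) (x : E) : ℝ :=
  ∫ s in Ioi 0, s ^ (-lam - 1) *
    (Δ_[s])^[k] (setAtZero (f x) (fun τ => ∫ z, f z ∂P τ x)) 0

lemma IsAnalyticFlow.exists_bounds (h : IsAnalyticFlow P C) :
    ∃ K : ℕ → ℝ, (∀ i, 0 ≤ K i) ∧ ∀ (f : E → ℝ) (M : ℝ), Measurable f → (∀ z, |f z| ≤ M) →
      ∀ i, ∀ t > 0, ∀ x,
        |iteratedDeriv i (fun τ => ∫ z, f z ∂P τ x) t| ≤ K i * M * t ^ (-(i : ℝ)) ∧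
        HasDerivAt (iteratedDeriv i (fun τ => ∫ z, f z ∂P τ x))
          (iteratedDeriv (i + 1) (fun τ => ∫ z, f z ∂P τ x) t) t := by
  choose K hK hK' using fun i => IsOrbit.iteratedDeriv h 0 le_rfl i
  refine ⟨K, hK, fun f M hf hM i t ht x => ?_⟩
  have hM0 : 0 ≤ M := (abs_nonneg _).trans (hM x)
  have := (hK' i _ M (h.isOrbit hf hM) hM0
    (fun t ht x => by simpa using h.abs_integral_le hM ht x)).2 t ht x
  simpa using this

/-- Interpolation: bounds on the intermediate derivatives of `P_t f` near the origin. -/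
lemma IsAnalyticFlow.exists_deriv_bound (h : IsAnalyticFlow P C) {β γ : ℝ} (hγ0 : 0 ≤ γ)
    (hγβ : γ ≤ β) {n m : ℕ} (hmn : m ≤ n) (hm : 1 ≤ m) (hγm : γ < m) :
    ∃ K ≥ 0, ∀ (f : E → ℝ) (M A : ℝ), Measurable f → (∀ z, |f z| ≤ M) → 0 ≤ A →
      (∀ t > 0, ∀ x, |iteratedDeriv n (fun τ => ∫ z, f z ∂P τ x) t| ≤ A * t ^ (β - n)) →
      ∀ t > 0, ∀ x, |iteratedDeriv m (fun τ => ∫ z, f z ∂P τ x) t| ≤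
        K * (M + A) * t ^ (γ - m) := by
  obtain ⟨K, hK, hb⟩ := h.exists_bounds
  obtain ⟨i, rfl⟩ := Nat.exists_eq_add_of_le hmn
  obtain ⟨c, hc, hcb⟩ := exists_const_abs_deriv_le_rpow γ m hm hγm i
  refine ⟨c * (K (m + i) + 1), by have := hK (m + i); positivity,
    fun f M A hf hM hA hn t ht x => ?_⟩
  have hM0 : 0 ≤ M := (abs_nonneg _).trans (hM x)
  have hK0 := hK (m + i)
  have key := hcb (fun i => iteratedDeriv i (fun τ => ∫ z, f z ∂P τ x))
    ((K (m + i) + 1) * (M + A)) (fun j τ hτ => (hb f M hf hM j τ hτ x).2) (fun j hj => ?_)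
    (fun τ hτ => ?_) t ht
  · simpa [mul_assoc] using key
  · have h0 : Tendsto (fun t : ℝ => K j * M * t ^ (-(j : ℝ))) atTop (𝓝 (K j * M * 0)) :=
      (tendsto_rpow_neg_atTop (by exact_mod_cast hj)).const_mul _
    rw [mul_zero] at h0
    refine squeeze_zero_norm' ?_ h0
    filter_upwards [eventually_gt_atTop 0] with τ hτ using (hb f M hf hM j τ hτ x).1
  · rcases le_total τ 1 with h1 | h1
    · refine (hn τ hτ x).trans (mul_le_mul ?_ ?_ (by positivity) (by positivity))
      · nlinarith [mul_nonneg hK0 hM0, mul_nonneg hK0 hA]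
      · exact rpow_le_rpow_of_exponent_ge hτ h1 (by linarith)
    · refine (hb f M hf hM (m + i) τ hτ x).1.trans (mul_le_mul ?_ ?_ (by positivity)
        (by positivity))
      · nlinarith [mul_nonneg hK0 hM0, mul_nonneg hK0 hA]
      · exact rpow_le_rpow_of_exponent_le h1 (by linarith)

lemma IsAnalyticFlow.exists_tendsto (h : IsAnalyticFlow P C) {β : ℝ} (hβ : 1 ≤ β) {n : ℕ}
    (hn : 1 ≤ n) {f : E → ℝ} {M A : ℝ} (hf : Measurable f) (hM : ∀ z, |f z| ≤ M) (hA : 0 ≤ A)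
    (hnb : ∀ t > 0, ∀ x, |iteratedDeriv n (fun τ => ∫ z, f z ∂P τ x) t| ≤ A * t ^ (β - n))
    (x : E) : ∃ l, Tendsto (fun τ => ∫ z, f z ∂P τ x) (𝓝[>] 0) (𝓝 l) := by
  obtain ⟨K, hK, hb⟩ := h.exists_bounds
  obtain ⟨K', hK', hb'⟩ := h.exists_deriv_bound (β := β) (γ := 1 / 2) (by norm_num)
    (by linarith) hn le_rfl (by norm_num)
  refine exists_tendsto_nhdsGT_zero (q := 1 / 2)
    (g' := iteratedDeriv 1 (fun τ => ∫ z, f z ∂P τ x)) (B := K' * (M + A)) (by norm_num)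
    (fun t ht => by simpa using (hb f M hf hM 0 t ht x).2) (fun t ht => ?_)
  simpa using hb' f M A hf hM hA hnb t ht x

lemma IsAnalyticFlow.measurable_fwdDiff (h : IsAnalyticFlow P C) {f : E → ℝ} (hf : Measurable f)
    (k : ℕ) : Measurable fun p : ℝ × E =>
      (Δ_[p.1])^[k] (setAtZero (f p.2) (fun τ => ∫ z, f z ∂P τ p.2)) 0 := by
  simp_rw [fwdDiff_iter_eq_sum_real, setAtZero]
  refine Finset.measurable_sum _ fun i _ => Measurable.const_mul ?_ _
  have h1 : Measurable fun p : ℝ × E => 0 + (i : ℝ) * p.1 := by fun_prop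
  refine Measurable.ite (h1 (measurableSet_singleton 0)) (hf.comp measurable_snd) ?_
  exact (h.meas f hf).comp (h1.prodMk measurable_snd)

/-- `P_t` applied to the `k`-th difference at the origin gives the `k`-th difference at `t`. -/
lemma IsAnalyticFlow.integral_fwdDiff (h : IsAnalyticFlow P C) {f : E → ℝ} {M : ℝ}
    (hf : Measurable f) (hM : ∀ z, |f z| ≤ M) (k : ℕ) {s t : ℝ} (hs : 0 < s) (ht : 0 < t) (x : E) :
    ∫ y, (Δ_[s])^[k] (setAtZero (f y) (fun τ => ∫ z, f z ∂P τ y)) 0 ∂P t x =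
      (Δ_[s])^[k] (fun τ => ∫ z, f z ∂P τ x) t := by
  have := h.prob t ht x
  simp_rw [fwdDiff_iter_eq_sum_real]
  have hterm : ∀ i : ℕ, Integrable (fun y => setAtZero (f y) (fun τ => ∫ z, f z ∂P τ y)
      (0 + i * s)) (P t x) ∧ ∫ y, setAtZero (f y) (fun τ => ∫ z, f z ∂P τ y) (0 + i * s) ∂P t x =
      ∫ z, f z ∂P (t + i * s) x := fun i => by
    rcases Nat.eq_zero_or_pos i with rfl | hi
    · simp only [setAtZero, Nat.cast_zero, zero_mul, add_zero, if_true, and_true]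
      exact Integrable.of_bound hf.aestronglyMeasurable M (Eventually.of_forall hM)
    · have hpos : 0 < (i : ℝ) * s := by positivity
      simp_rw [zero_add, setAtZero_of_pos _ _ hpos]
      refine ⟨Integrable.of_bound (((h.meas f hf).comp measurable_prodMk_left).aestronglyMeasurable)
        M (Eventually.of_forall fun y => h.abs_integral_le hM hpos y), ?_⟩
      exact h.comp f M hf hM t ht _ hpos x
  rw [integral_finsetSum _ fun i _ => (hterm i).1.const_mul _]
  refine Finset.sum_congr rfl fun i _ => ?_
  rw [integral_const_mul, (hterm i).2]

theorem IsAnalyticFlow.exists_fracInt_bound (h : IsAnalyticFlow P C)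
    (hlim : ∀ (f : E → ℝ) (M : ℝ) (g : E → ℝ), Measurable f → (∀ z, |f z| ≤ M) →
      (∀ x, Tendsto (fun τ => ∫ z, f z ∂P τ x) (𝓝[>] 0) (𝓝 (g x))) →
      ∀ t > 0, ∀ x, ∀ᵐ y ∂P t x, f y = g y)
    {lam β : ℝ} (hlam : 1 ≤ lam) (hlamβ : lam < β) :
    ∃ K ≥ 0, ∀ (f : E → ℝ) (M A : ℝ), Measurable f → (∀ z, |f z| ≤ M) → 0 ≤ A →
      (∀ t > 0, ∀ x, |iteratedDeriv (⌊β⌋₊ + 1) (fun τ => ∫ z, f z ∂P τ x) t| ≤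
        A * t ^ (β - (⌊β⌋₊ + 1 : ℕ))) →
      (∀ x, |fracInt P lam (⌊lam⌋₊ + 1) f x| ≤ K * (M + A)) ∧
      ∀ t > 0, ∀ x,
        |iteratedDeriv (⌊β⌋₊ + 1) (fun τ => ∫ y, fracInt P lam (⌊lam⌋₊ + 1) f y ∂P τ x) t| ≤
          K * (M + A) * t ^ (β - lam - (⌊β⌋₊ + 1 : ℕ)) := by
  set n := ⌊β⌋₊ + 1 with hn
  set m := ⌊lam⌋₊ with hm
  have hlam0 : 0 < lam := by linarith
  have hmle : (m : ℝ) ≤ lam := Nat.floor_le hlam0.le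
  have hltm : lam < (m : ℝ) + 1 := Nat.lt_floor_add_one lam
  have hβn : β < n := by rw [hn]; push_cast; exact Nat.lt_floor_add_one β
  have hmn : m + 1 ≤ n := by
    have : ⌊lam⌋₊ ≤ ⌊β⌋₊ := Nat.floor_mono hlamβ.le
    omega
  obtain ⟨γ, hγlam, hγβ, hγm⟩ : ∃ γ, lam < γ ∧ γ ≤ β ∧ γ < (m : ℝ) + 1 :=
    ⟨min β ((lam + (m + 1)) / 2), lt_min hlamβ (by linarith), min_le_left _ _,
      (min_le_right _ _).trans_lt (by linarith)⟩
  have hk : lam < ((m + 1 : ℕ) : ℝ) := by push_cast; exact hltm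
  have hq : 0 < γ - m := by linarith
  obtain ⟨K, hK, hb⟩ := h.exists_bounds
  obtain ⟨K₁, hK₁, hb₁⟩ := h.exists_deriv_bound (β := β) (γ := γ) (n := n) (m := m + 1)
    (by linarith) hγβ hmn (by omega) (by push_cast; exact hγm)
  obtain ⟨K₂, hK₂, hb₂⟩ := IsOrbit.iteratedDeriv h (β - n) (by linarith) (m + 1)
  obtain ⟨K₃, hK₃, hb₃⟩ := IsOrbit.iteratedDeriv h 0 le_rfl n
  set L₁ := K₁ / (γ - m) * (1 / (γ - lam)) + 2 ^ (m + 1) * (1 / lam) with hL₁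
  set L₂ := K₂ * (1 / (m + 1 - lam)) + 2 ^ (m + 1) * (1 / lam) with hL₂
  have hL₁0 : 0 ≤ L₁ := by
    have : 0 < γ - lam := by linarith
    positivity
  have hL₂0 : 0 ≤ L₂ := by
    have : 0 < m + 1 - lam := by linarith
    positivity
  refine ⟨L₁ + L₂, by positivity, fun f M A hf hM hA hnb => ?_⟩
  set u : E → ℝ → ℝ := fun x τ => ∫ z, f z ∂P τ x with hu
  rcases isEmpty_or_nonempty E with hE | ⟨⟨x₀⟩⟩
  · exact ⟨fun x => hE.elim x, fun t _ x => hE.elim x⟩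
  have hM0 : 0 ≤ M := (abs_nonneg _).trans (hM x₀)
  have hchain : ∀ x i, ∀ τ > 0,
      HasDerivAt (iteratedDeriv i (u x)) (iteratedDeriv (i + 1) (u x) τ) τ :=
    fun x i τ hτ => (hb f M hf hM i τ hτ x).2
  have hcont : ∀ x, ContinuousOn (u x) (Ioi 0) := fun x t ht => by
    have := (hchain x 0 t ht).continuousAt.continuousWithinAt (s := Ioi 0)
    rwa [iteratedDeriv_zero] at this
  choose l hl using fun x => h.exists_tendsto (hlam.trans hlamβ.le) (show 1 ≤ n by omega) hf hM hA
    hnb x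
  have hlM : ∀ x, |l x| ≤ M := fun x => by
    refine le_of_tendsto (hl x).abs ?_
    filter_upwards [self_mem_nhdsWithin] with t ht using h.abs_integral_le hM ht x
  have hsmall : ∀ x, ∀ s > 0, |(Δ_[s])^[m + 1] (setAtZero (l x) (u x)) 0| ≤
      K₁ * (M + A) / (γ - m) * s ^ γ := fun x s hs => by
    have := abs_fwdDiff_iter_setAtZero_le (G := fun i => iteratedDeriv i (u x)) (l := l x)
      (B := K₁ * (M + A)) (q := γ - m) m hs hq (by linarith) (by positivity) (hchain x)
      (by simpa using hl x) (fun τ hτ => by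
        have := hb₁ f M A hf hM hA hnb τ hτ x
        rwa [show γ - ((m + 1 : ℕ) : ℝ) = γ - m - 1 by push_cast; ring] at this)
    simpa using this
  have hlarge : ∀ x, ∀ s > 0, |(Δ_[s])^[m + 1] (setAtZero (l x) (u x)) 0| ≤ 2 ^ (m + 1) * M :=
    fun x s hs => abs_fwdDiff_iter_le (m + 1) hs.le fun τ hτ => by
      rcases eq_or_lt_of_le hτ with rfl | hτ
      · simpa [setAtZero] using hlM x
      · rw [setAtZero_of_pos _ _ hτ]; exact h.abs_integral_le hM hτ x
  have hgood : ∀ x, f x = l x → ∀ F : ℝ → ℝ, AEStronglyMeasurable F (volume.restrict (Ioi 0)) →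
      (∀ s > 0, |F s| ≤ |(Δ_[s])^[m + 1] (setAtZero (l x) (u x)) 0|) →
      IntegrableOn (fun s => s ^ (-lam - 1) * F s) (Ioi 0) ∧
        |∫ s in Ioi 0, s ^ (-lam - 1) * F s| ≤ L₁ * (M + A) := fun x hx F hF hFb => by
    have := integrableOn_rpow_mul_and_abs_integral_le (F := F) (p := γ) (T := 1) hlam0 hγlam one_pos
      hF (fun s hs _ => (hFb s hs).trans (hsmall x s hs))
      (fun s hs => (hFb s (one_pos.trans hs)).trans (hlarge x s (one_pos.trans hs)))
    refine ⟨this.1, this.2.trans ?_⟩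
    rw [one_rpow, one_rpow, hL₁]
    have h2 : (2 : ℝ) ^ (m + 1) * M * (1 / lam) ≤ 2 ^ (m + 1) * (M + A) * (1 / lam) := by
      gcongr; linarith
    calc _ ≤ K₁ * (M + A) / (γ - m) * (1 / (γ - lam)) + 2 ^ (m + 1) * (M + A) * (1 / lam) := by
          gcongr
      _ = _ := by ring
  have hΨmeas : ∀ x a, AEStronglyMeasurable (fun s => (Δ_[s])^[m + 1] (setAtZero a (u x)) 0)
      (volume.restrict (Ioi 0)) := fun x a =>
    (continuousOn_fwdDiff_iter_setAtZero (m + 1) a (hcont x)).aestronglyMeasurable measurableSet_Ioi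
  have hbound : ∀ x, |fracInt P lam (m + 1) f x| ≤ L₁ * (M + A) := fun x => by
    by_cases hx : f x = l x
    · exact (hgood x hx _ (hΨmeas x (f x)) (fun s _ => by rw [hx])).2
    · have hni : ¬ IntegrableOn (fun s => s ^ (-lam - 1) *
          (Δ_[s])^[m + 1] (setAtZero (f x) (u x)) 0) (Ioi 0) := by
        refine not_integrableOn_rpow_mul (c := 0 + (-1) ^ (m + 1) * (f x - l x)) hlam0 ?_ ?_
        · simpa using sub_ne_zero.2 hx
        · have h1 : Tendsto (fun s => (Δ_[s])^[m + 1] (setAtZero (l x) (u x)) 0) (𝓝[>] 0)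
              (𝓝 0) := by
            have h2 : Tendsto (fun s : ℝ => K₁ * (M + A) / (γ - m) * s ^ γ) (𝓝[>] 0) (𝓝 0) := by
              have : ContinuousAt (fun s : ℝ => K₁ * (M + A) / (γ - m) * s ^ γ) 0 :=
                continuousAt_const.mul (continuousAt_rpow_const 0 γ (Or.inr (by linarith)))
              have h0 := this.tendsto
              rw [zero_rpow (by linarith), mul_zero] at h0
              exact h0.mono_left nhdsWithin_le_nhds
            refine squeeze_zero_norm' ?_ h2
            filter_upwards [self_mem_nhdsWithin] with s hs using hsmall x s hs
          refine (h1.add_const _).congr' ?_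
          filter_upwards [self_mem_nhdsWithin] with s hs
          exact (fwdDiff_iter_setAtZero_sub (u x) (m + 1) (f x) (l x) hs).symm
      have : fracInt P lam (m + 1) f x = 0 := integral_undef hni
      rw [this, abs_zero]
      positivity
  refine ⟨fun x => (hbound x).trans (by gcongr; linarith), fun t ht x => ?_⟩
  have hae := hlim f M l hf hM hl
  have hcommute : ∀ τ > 0, ∫ y, fracInt P lam (m + 1) f y ∂P τ x =
      ∫ s in Ioi 0, s ^ (-lam - 1) * (Δ_[s])^[m + 1] (iteratedDeriv 0 (u x)) τ := fun τ hτ => by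
    have := h.prob τ hτ x
    have hmeas : Measurable fun p : E × ℝ => p.2 ^ (-lam - 1) *
        (Δ_[p.2])^[m + 1] (setAtZero (f p.1) (u p.1)) 0 :=
      (measurable_snd.pow_const _).mul ((h.measurable_fwdDiff hf (m + 1)).comp measurable_swap)
    have h_int : Integrable (fun p : E × ℝ => p.2 ^ (-lam - 1) *
        (Δ_[p.2])^[m + 1] (setAtZero (f p.1) (u p.1)) 0)
        ((P τ x).prod (volume.restrict (Ioi 0))) := by
      rw [integrable_prod_iff hmeas.aestronglyMeasurable]
      refine ⟨?_, ?_⟩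
      · filter_upwards [hae τ hτ x] with y hy
        exact (hgood y hy _ (hΨmeas y (f y)) (fun s _ => by rw [hy])).1
      · refine Integrable.of_bound
          (hmeas.aestronglyMeasurable.norm.integral_prod_right') (L₁ * (M + A)) ?_
        filter_upwards [hae τ hτ x] with y hy
        have h1 := (hgood y hy _ (hΨmeas y (f y)).norm (fun s _ => by rw [hy]; simp)).2
        have h2 : ∫ s in Ioi 0, ‖s ^ (-lam - 1) * (Δ_[s])^[m + 1] (setAtZero (f y) (u y)) 0‖ =
            ∫ s in Ioi 0, s ^ (-lam - 1) * ‖(Δ_[s])^[m + 1] (setAtZero (f y) (u y)) 0‖ := by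
          refine setIntegral_congr_fun measurableSet_Ioi fun s hs => ?_
          have : (0 : ℝ) ≤ s ^ (-lam - 1) := rpow_nonneg (le_of_lt hs) _
          simp only [norm_mul, Real.norm_of_nonneg this]
        rw [Real.norm_eq_abs, h2]; exact h1
    simp only [fracInt]
    rw [integral_integral_swap h_int]
    refine setIntegral_congr_fun measurableSet_Ioi fun s hs => ?_
    simp only [iteratedDeriv_zero]
    rw [integral_const_mul, h.integral_fwdDiff hf hM (m + 1) hs hτ x]
  rw [iteratedDeriv_eq_of_hasDerivAt (G := fun i τ => ∫ s in Ioi 0, s ^ (-lam - 1) *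
      (Δ_[s])^[m + 1] (iteratedDeriv i (u x)) τ)
    (fun i τ hτ => hasDerivAt_integral_fwdDiff (G := fun i => iteratedDeriv i (u x))
      hlam0 hk (hchain x)
      (fun i => ⟨K i * M, mul_nonneg (hK i) hM0, fun t ht => (hb f M hf hM i t ht x).1⟩) i hτ)
    hcommute n t ht]
  have hcontn : ContinuousOn (iteratedDeriv n (u x)) (Ioi 0) := fun t ht =>
    (hchain x n t ht).continuousAt.continuousWithinAt
  have hOn := (hb₃ _ M (h.isOrbit hf hM) hM0
    (fun t ht x => by simpa using h.abs_integral_le hM ht x)).1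
  have hnk : ∀ τ > 0, |iteratedDeriv (n + (m + 1)) (u x) τ| ≤
      K₂ * A * τ ^ (β - n - (m + 1 : ℕ)) := fun τ hτ => by
    have := ((hb₂ _ A hOn hA hnb).2 τ hτ x).1
    rwa [show iteratedDeriv (m + 1) (fun τ => iteratedDeriv n (fun τ => ∫ z, f z ∂P τ x) τ) =
      iteratedDeriv (n + (m + 1)) (u x) by
        rw [add_comm n]
        simp only [iteratedDeriv_eq_iterate, Function.iterate_add_apply, hu]] at this
  have hfin := (integrableOn_rpow_mul_and_abs_integral_le (lam := lam) (p := (m + 1 : ℕ)) (T := t)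
    (F := fun s => (Δ_[s])^[m + 1] (iteratedDeriv n (u x)) t)
    (a := K₂ * A * t ^ (β - n - (m + 1 : ℕ))) (b := 2 ^ (m + 1) * (A * t ^ (β - n)))
    hlam0 hk ht
    ((continuousOn_fwdDiff_iter (m + 1) ht hcontn).aestronglyMeasurable measurableSet_Ioi)
    (fun s hs _ => by
      have := abs_fwdDiff_iter_le_of_deriv (G := fun j => iteratedDeriv (n + j) (u x)) (s := s)
        (t := t) (B := K₂ * A * t ^ (β - n - (m + 1 : ℕ))) (m + 1) hs.le ht
        (fun j => hchain x (n + j)) (fun τ hτ => (hnk τ (ht.trans_le hτ)).trans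
          (mul_le_mul_of_nonneg_left (rpow_le_rpow_of_nonpos ht hτ (by push_cast; linarith))
            (by positivity)))
      rw [rpow_natCast, mul_comm]
      simpa using this)
    (fun s hs => abs_fwdDiff_iter_le (m + 1) (ht.trans hs).le fun τ hτ =>
      (hnb τ (ht.trans_le hτ) x).trans
        (mul_le_mul_of_nonneg_left (rpow_le_rpow_of_nonpos ht hτ (by linarith)) hA))).2
  refine hfin.trans ?_
  have e1 : t ^ (β - n - (m + 1 : ℕ)) * t ^ (((m + 1 : ℕ) : ℝ) - lam) = t ^ (β - lam - n) := by
    rw [← rpow_add ht]; congr 1; ring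
  have e2 : t ^ (β - n) * t ^ (-lam) = t ^ (β - lam - n) := by
    rw [← rpow_add ht]; congr 1; ring
  calc _ = L₂ * A * t ^ (β - lam - n) := by
        rw [hL₂]
        have : ((m + 1 : ℕ) : ℝ) = m + 1 := by push_cast; ring
        calc _ = K₂ * A * (t ^ (β - n - (m + 1 : ℕ)) * t ^ (((m + 1 : ℕ) : ℝ) - lam)) /
              (((m + 1 : ℕ) : ℝ) - lam) + 2 ^ (m + 1) * A * (t ^ (β - n) * t ^ (-lam)) / lam := by
                ring
          _ = _ := by rw [e1, e2, this]; ring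
    _ ≤ _ := by
        gcongr <;> linarith

end Flow

theorem integral_exp_neg_pow_eq {μ ν : Measure ℝ}
    (h : ∀ n : ℕ, ∫⁻ y, ENNReal.ofReal (exp (-(n * y))) ∂μ =
      ∫⁻ y, ENNReal.ofReal (exp (-(n * y))) ∂ν) (n : ℕ) :
    ∫ y, (exp (-y)) ^ n ∂μ = ∫ y, (exp (-y)) ^ n ∂ν := by
  have key : ∀ ρ : Measure ℝ, ∫ y, (exp (-y)) ^ n ∂ρ =
      (∫⁻ y, ENNReal.ofReal (exp (-(n * y))) ∂ρ).toReal := fun ρ => by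
    rw [← integral_eq_lintegral_of_nonneg_ae (ae_of_all _ fun y => (exp_pos _).le)
      (by fun_prop)]
    refine integral_congr_ae (ae_of_all _ fun y => ?_)
    simp only [← exp_nat_mul]
    ring_nf
  rw [key, key, h]

theorem hasSum_charFun_map_exp_neg {μ : Measure ℝ} [IsFiniteMeasure μ] (hμ : ∀ᵐ y ∂μ, 0 ≤ y)
    (t : ℝ) : HasSum (fun n : ℕ => ((t * Complex.I) ^ n / n.factorial : ℂ) *
      ((∫ y, (exp (-y)) ^ n ∂μ : ℝ) : ℂ)) (charFun (μ.map fun y => exp (-y)) t) := by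
  have h1 : charFun (μ.map fun y => exp (-y)) t =
      ∫ y, Complex.exp (t * Complex.I * (exp (-y) : ℝ)) ∂μ := by
    rw [charFun_apply_real, integral_map (by fun_prop) (by fun_prop)]
    refine integral_congr_ae (ae_of_all _ fun y => ?_)
    simp only; ring_nf
  have h2 : ∀ n : ℕ, ((t * Complex.I) ^ n / n.factorial : ℂ) *
      ((∫ y, (exp (-y)) ^ n ∂μ : ℝ) : ℂ) =
      ∫ y, ((t * Complex.I * (exp (-y) : ℝ)) ^ n / n.factorial : ℂ) ∂μ := fun n => by
    rw [← integral_complex_ofReal, ← integral_const_mul]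
    refine integral_congr_ae (ae_of_all _ fun y => ?_)
    simp only; push_cast; ring
  rw [h1]; simp_rw [h2]
  refine hasSum_integral_of_dominated_convergence (fun n _ => |t| ^ n / n.factorial)
    (fun n => by fun_prop) (fun n => ?_) (ae_of_all _ fun y => summable_pow_div_factorial |t|)
    (integrable_const _) (ae_of_all _ fun y => ?_)
  · filter_upwards [hμ] with y hy
    have : exp (-y) ≤ 1 := exp_le_one_iff.2 (by linarith)
    simp only [norm_div, norm_pow, norm_mul, Complex.norm_real, Complex.norm_I, mul_one,
      Complex.norm_natCast, Real.norm_eq_abs, abs_of_pos (exp_pos _)]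
    gcongr
    exact mul_le_of_le_one_right (abs_nonneg t) this
  · rw [Complex.exp_eq_exp_ℂ]
    exact NormedSpace.expSeries_div_hasSum_exp _

theorem measure_ext_of_lintegral_exp_neg {μ ν : Measure ℝ} [IsFiniteMeasure μ] [IsFiniteMeasure ν]
    (hμ : ∀ᵐ y ∂μ, 0 ≤ y) (hν : ∀ᵐ y ∂ν, 0 ≤ y)
    (h : ∀ n : ℕ, ∫⁻ y, ENNReal.ofReal (exp (-(n * y))) ∂μ =
      ∫⁻ y, ENNReal.ofReal (exp (-(n * y))) ∂ν) : μ = ν := by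
  have hX : MeasurableEmbedding fun y : ℝ => exp (-y) :=
    Measurable.measurableEmbedding (by fun_prop) fun a b hab => by
      simpa using exp_injective hab
  have hmap : μ.map (fun y => exp (-y)) = ν.map fun y => exp (-y) := by
    refine Measure.ext_of_charFun (funext fun t => ?_)
    refine (hasSum_charFun_map_exp_neg hμ t).unique ?_
    simpa only [integral_exp_neg_pow_eq h] using hasSum_charFun_map_exp_neg hν t
  rw [← hX.comap_map μ, hmap, hX.comap_map]

theorem lintegral_fin_prod_eq_prod : ∀ {d : ℕ} {f : Fin d → ℝ → ℝ≥0∞}, (∀ j, Measurable (f j)) →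
    ∫⁻ y : Fin d → ℝ, ∏ j, f j (y j) = ∏ j, ∫⁻ y, f j y
  | 0, f, _ => by simp [volume_pi]
  | d + 1, f, hf => by
    have hm : Measurable fun y : Fin (d + 1) → ℝ => ∏ j, f j (y j) := by fun_prop
    rw [← (volume_preserving_piFinSuccAbove (fun _ : Fin (d + 1) => ℝ) 0).symm.lintegral_comp hm,
      Fin.prod_univ_succ]
    simp_rw [Fin.prod_univ_succ, MeasurableEquiv.piFinSuccAbove_symm_apply]
    simp only [Fin.insertNthEquiv_apply, Fin.insertNth_zero', Fin.cons_zero, Fin.cons_succ]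
    rw [Measure.volume_eq_prod, lintegral_prod_mul (f := f 0)
      (g := fun z : Fin d → ℝ => ∏ i, f i.succ (z i)) (by fun_prop)
      (Finset.measurable_prod _ fun i _ => (hf i.succ).comp (measurable_pi_apply i)).aemeasurable,
      lintegral_fin_prod_eq_prod fun j => hf j.succ]

/-- The density in `y` of the Laguerre heat kernel on `(0,∞)` at time `s`, started at `|x|`, with
`a = α + 1`: a Poisson mixture of gamma densities. -/
@[irreducible] noncomputable def heatDensity (a s x y : ℝ) : ℝ≥0∞ :=
  ∑' m : ℕ, ENNReal.ofReal (exp (-(exp (-s) * |x| / (1 - exp (-s)))) *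
    (exp (-s) * |x| / (1 - exp (-s))) ^ m / m.factorial) *
      gammaPDF (m + a) (1 / (1 - exp (-s))) y

theorem measurable_heatDensity (a : ℝ) :
    Measurable fun p : ℝ × ℝ × ℝ => heatDensity a p.1 p.2.1 p.2.2 := by
  unfold heatDensity ProbabilityTheory.gammaPDF ProbabilityTheory.gammaPDFReal
  refine Measurable.tsum fun m => ?_
  refine Measurable.mul (by fun_prop) (Measurable.ennreal_ofReal ?_)
  exact Measurable.ite (measurableSet_le measurable_const (by fun_prop)) (by fun_prop)
    measurable_const

@[fun_prop]
theorem measurable_heatDensity_comp {Ω : Type*} [MeasurableSpace Ω] {a : ℝ} {s x y : Ω → ℝ}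
    (hs : Measurable s) (hx : Measurable x) (hy : Measurable y) :
    Measurable fun ω => heatDensity a (s ω) (x ω) (y ω) :=
  (measurable_heatDensity a).comp (hs.prodMk (hx.prodMk hy))

theorem heatDensity_of_neg {a s x y : ℝ} (hy : y < 0) : heatDensity a s x y = 0 := by
  simp [heatDensity, ProbabilityTheory.gammaPDF_of_neg hy]

theorem ofReal_exp_mul_gammaPDF {b r θ : ℝ} (hr : 0 < r) (hθ : 0 ≤ θ) (y : ℝ) :
    ENNReal.ofReal (exp (-(θ * y))) * gammaPDF b r y =
      ENNReal.ofReal ((r / (r + θ)) ^ b) * gammaPDF b (r + θ) y := by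
  rcases lt_or_ge y 0 with hy | hy
  · simp [ProbabilityTheory.gammaPDF_of_neg hy]
  · rw [ProbabilityTheory.gammaPDF_of_nonneg hy, ProbabilityTheory.gammaPDF_of_nonneg hy,
      ← ENNReal.ofReal_mul (exp_pos _).le, ← ENNReal.ofReal_mul (by positivity)]
    congr 1
    rw [div_rpow hr.le (by positivity)]
    have h1 : exp (-((r + θ) * y)) = exp (-(r * y)) * exp (-(θ * y)) := by
      rw [← exp_add]; ring_nf
    have h2 : (r + θ) ^ b ≠ 0 := (rpow_pos_of_pos (by positivity) _).ne'
    rw [h1]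
    field_simp

theorem lintegral_exp_mul_gammaPDF {b r θ : ℝ} (hb : 0 < b) (hr : 0 < r) (hθ : 0 ≤ θ) :
    ∫⁻ y, ENNReal.ofReal (exp (-(θ * y))) * gammaPDF b r y =
      ENNReal.ofReal ((r / (r + θ)) ^ b) := by
  simp_rw [ofReal_exp_mul_gammaPDF hr hθ]
  rw [lintegral_const_mul _ (by unfold gammaPDF; fun_prop),
    ProbabilityTheory.lintegral_gammaPDF_eq_one hb (by positivity), mul_one]

theorem one_sub_exp_neg_pos {s : ℝ} (hs : 0 < s) : 0 < 1 - exp (-s) := by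
  rw [sub_pos]; simpa using hs

theorem lintegral_exp_mul_heatDensity {a s θ : ℝ} (ha : 0 < a) (hs : 0 < s) (hθ : 0 ≤ θ) (x : ℝ) :
    ∫⁻ y, ENNReal.ofReal (exp (-(θ * y))) * heatDensity a s x y =
      ENNReal.ofReal ((1 + θ * (1 - exp (-s))) ^ (-a) *
        exp (-(θ * exp (-s) * |x| / (1 + θ * (1 - exp (-s)))))) := by
  have hc := one_sub_exp_neg_pos hs
  unfold heatDensity
  set c := 1 - exp (-s) with hcdef
  set μ := exp (-s) * |x| / c with hμdef
  have hμ : 0 ≤ μ := by positivity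
  have hq : (0 : ℝ) < 1 + θ * c := by positivity
  simp_rw [← ENNReal.tsum_mul_left]
  rw [lintegral_tsum fun m => by unfold gammaPDF; fun_prop]
  have hterm : ∀ m : ℕ, ∫⁻ y, ENNReal.ofReal (exp (-(θ * y))) *
      (ENNReal.ofReal (exp (-μ) * μ ^ m / m.factorial) * gammaPDF (m + a) (1 / c) y) =
      ENNReal.ofReal (exp (-μ) * (1 + θ * c) ^ (-a) * ((μ / (1 + θ * c)) ^ m / m.factorial)) :=
    fun m => by
      simp_rw [mul_left_comm (ENNReal.ofReal (exp (-(θ * _))))]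
      rw [lintegral_const_mul _ (by unfold gammaPDF; fun_prop),
        lintegral_exp_mul_gammaPDF (by positivity) (by positivity) hθ,
        ← ENNReal.ofReal_mul (by positivity)]
      have : 1 / c / (1 / c + θ) = (1 + θ * c)⁻¹ := by field_simp
      rw [this, rpow_add (by positivity), rpow_natCast, inv_rpow hq.le, ← rpow_neg hq.le]
      congr 1
      rw [div_pow, inv_pow]
      ring
  simp_rw [hterm]
  have hsum := (NormedSpace.expSeries_div_hasSum_exp (𝔸 := ℝ) (μ / (1 + θ * c))).mul_left
    (exp (-μ) * (1 + θ * c) ^ (-a))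
  rw [← ENNReal.ofReal_tsum_of_nonneg (fun m => by positivity) hsum.summable, hsum.tsum_eq,
    ← Real.exp_eq_exp_ℝ]
  congr 1
  rw [mul_right_comm, ← exp_add, mul_comm]
  congr 2
  rw [hμdef]
  field_simp
  ring

theorem lintegral_heatDensity {a s : ℝ} (ha : 0 < a) (hs : 0 < s) (x : ℝ) :
    ∫⁻ y, heatDensity a s x y = 1 := by
  simpa using lintegral_exp_mul_heatDensity ha hs le_rfl x

theorem lintegral_heatDensity_comp {a s t : ℝ} (ha : 0 < a) (hs : 0 < s) (ht : 0 < t) (x : ℝ) :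
    ∀ᵐ z, ∫⁻ y, heatDensity a s x y * heatDensity a t y z = heatDensity a (s + t) x z := by
  have hst : 0 < s + t := add_pos hs ht
  have hm1 : Measurable fun z => ∫⁻ y, heatDensity a s x y * heatDensity a t y z :=
    Measurable.lintegral_prod_left'
      (f := fun p : ℝ × ℝ => heatDensity a s x p.1 * heatDensity a t p.1 p.2) (by fun_prop)
  have hm3 : Measurable (heatDensity a (s + t) x) := by fun_prop
  have hmul : ∀ θ : ℝ, 0 ≤ θ → ∫⁻ z, ENNReal.ofReal (exp (-(θ * z))) *
      ∫⁻ y, heatDensity a s x y * heatDensity a t y z =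
      ∫⁻ z, ENNReal.ofReal (exp (-(θ * z))) * heatDensity a (s + t) x z := fun θ hθ => by
    have hq : (0 : ℝ) < 1 + θ * (1 - exp (-t)) := by
      have := one_sub_exp_neg_pos ht; positivity
    set φ := θ * exp (-t) / (1 + θ * (1 - exp (-t))) with hφ
    have hφ0 : 0 ≤ φ := by positivity
    calc _ = ∫⁻ z, ∫⁻ y, heatDensity a s x y *
          (ENNReal.ofReal (exp (-(θ * z))) * heatDensity a t y z) := by
          refine lintegral_congr fun z => ?_
          rw [← lintegral_const_mul _ (by fun_prop)]
          exact lintegral_congr fun y => mul_left_comm _ _ _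
      _ = ∫⁻ y, ∫⁻ z, heatDensity a s x y *
          (ENNReal.ofReal (exp (-(θ * z))) * heatDensity a t y z) := by
          refine lintegral_lintegral_swap (by fun_prop)
      _ = ∫⁻ y, ENNReal.ofReal ((1 + θ * (1 - exp (-t))) ^ (-a)) *
          (ENNReal.ofReal (exp (-(φ * y))) * heatDensity a s x y) := by
          refine lintegral_congr fun y => ?_
          rw [lintegral_const_mul _ (by fun_prop),
            lintegral_exp_mul_heatDensity ha ht hθ]
          rcases lt_or_ge y 0 with hy | hy
          · simp [heatDensity_of_neg hy]
          · rw [abs_of_nonneg hy, ENNReal.ofReal_mul (by positivity), mul_comm, mul_assoc, hφ,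
              div_mul_eq_mul_div]
      _ = _ := by
          rw [lintegral_const_mul _ (by fun_prop),
            lintegral_exp_mul_heatDensity ha hs hφ0, lintegral_exp_mul_heatDensity ha hst hθ,
            ← ENNReal.ofReal_mul (by positivity), ← mul_assoc, ← mul_rpow hq.le
              (by have := one_sub_exp_neg_pos hs; positivity)]
          have h1 : (1 + θ * (1 - exp (-t))) * (1 + φ * (1 - exp (-s))) =
              1 + θ * (1 - exp (-(s + t))) := by
            rw [hφ, neg_add, exp_add]; field_simp; ring
          have h2 : 1 + φ * (1 - exp (-s)) ≠ 0 := by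
            have := one_sub_exp_neg_pos hs; positivity
          rw [h1, ← h1]
          congr 4
          rw [show -(s + t) = -s + -t by ring, exp_add, hφ]
          rw [hφ] at h2
          field_simp
  have hmass : ∫⁻ z, ∫⁻ y, heatDensity a s x y * heatDensity a t y z = 1 := by
    have := hmul 0 le_rfl
    simpa [lintegral_heatDensity ha hst x] using this
  refine (withDensity_eq_iff hm1.aemeasurable hm3.aemeasurable (by simp [hmass])).1 ?_
  have : IsFiniteMeasure (volume.withDensity
      fun z => ∫⁻ y, heatDensity a s x y * heatDensity a t y z) :=
    isFiniteMeasure_withDensity (by simp [hmass])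
  have : IsFiniteMeasure (volume.withDensity (heatDensity a (s + t) x)) :=
    isFiniteMeasure_withDensity (by simp [lintegral_heatDensity ha hst x])
  refine measure_ext_of_lintegral_exp_neg ?_ ?_ fun n => ?_
  · rw [ae_withDensity_iff hm1]
    refine ae_of_all _ fun z hz => ?_
    by_contra hlt
    exact hz (by simp [heatDensity_of_neg (not_le.1 hlt)])
  · rw [ae_withDensity_iff hm3]
    refine ae_of_all _ fun z hz => ?_
    by_contra hlt
    exact hz (heatDensity_of_neg (not_le.1 hlt))
  · rw [lintegral_withDensity_eq_lintegral_mul _ hm1 (by fun_prop),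
      lintegral_withDensity_eq_lintegral_mul _ hm3 (by fun_prop)]
    simpa only [Pi.mul_apply, mul_comm (ENNReal.ofReal _)] using hmul n n.cast_nonneg

theorem heatDensity_eq_tsum {a s x y : ℝ} (ha : 0 < a) (hs : 0 < s) (hx : 0 < x) (hy : 0 < y) :
    heatDensity a s x y = ∑' m : ℕ, ENNReal.ofReal
      (exp (-((exp (-s) * x + y) / (1 - exp (-s)))) * (exp (-s) * x * y / (1 - exp (-s)) ^ 2) ^ m *
        (y ^ (a - 1) * (1 - exp (-s)) ^ (-a)) / (m.factorial * Gamma (m + a))) := by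
  have hc := one_sub_exp_neg_pos hs
  unfold heatDensity
  set c := 1 - exp (-s)
  rw [abs_of_pos hx]
  refine tsum_congr fun m => ?_
  have hG : 0 < Gamma (m + a) := Gamma_pos_of_pos (by positivity)
  rw [ProbabilityTheory.gammaPDF_of_nonneg hy.le, ← ENNReal.ofReal_mul (by positivity)]
  congr 1
  have h1 : exp (-((exp (-s) * x + y) / c)) = exp (-(exp (-s) * x / c)) * exp (-(1 / c * y)) := by
    rw [← exp_add]; ring_nf
  have h2 : y ^ (m + a - 1) = y ^ m * y ^ (a - 1) := by
    rw [add_sub_assoc, rpow_add hy, rpow_natCast]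
  have h3 : (1 / c) ^ (m + a) = (c ^ m)⁻¹ * c ^ (-a) := by
    rw [one_div, rpow_add (by positivity), rpow_natCast, inv_rpow hc.le, rpow_neg hc.le, inv_pow]
  rw [h1, h2, h3]
  simp only [div_pow, mul_pow, pow_right_comm c 2 m]
  field_simp

theorem heatDensity_symm {a s x y : ℝ} (ha : 0 < a) (hs : 0 < s) (hx : 0 < x) (hy : 0 < y) :
    gammaPDF a 1 x * heatDensity a s x y = gammaPDF a 1 y * heatDensity a s y x := by
  have hc := one_sub_exp_neg_pos hs
  have hG : 0 < Gamma a := Gamma_pos_of_pos ha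
  rw [heatDensity_eq_tsum ha hs hx hy, heatDensity_eq_tsum ha hs hy hx,
    ProbabilityTheory.gammaPDF_of_nonneg hx.le, ProbabilityTheory.gammaPDF_of_nonneg hy.le,
    ← ENNReal.tsum_mul_left, ← ENNReal.tsum_mul_left]
  refine tsum_congr fun m => ?_
  rw [← ENNReal.ofReal_mul (by positivity), ← ENNReal.ofReal_mul (by positivity)]
  congr 1
  have h : exp (-(1 * x)) * exp (-((exp (-s) * x + y) / (1 - exp (-s)))) =
      exp (-(1 * y)) * exp (-((exp (-s) * y + x) / (1 - exp (-s)))) := by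
    rw [← exp_add, ← exp_add]
    congr 1
    field_simp
    ring
  rw [show exp (-s) * y * x = exp (-s) * x * y by ring]
  linear_combination (1 ^ a / Gamma a * x ^ (a - 1) * y ^ (a - 1) *
    (exp (-s) * x * y / (1 - exp (-s)) ^ 2) ^ m * (1 - exp (-s)) ^ (-a) /
      (m.factorial * Gamma (m + a))) * h

theorem toReal_heatDensity {α s x y : ℝ} (hα : -1 < α) (hs : 0 < s) (hx : 0 < x) (hy : 0 < y) :
    (heatDensity (α + 1) s x y).toReal = (1 - exp (-s))⁻¹ * ((y / x) ^ (α / 2) *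
      exp (-((exp (-s) * x + y) / (1 - exp (-s))) - α * log (exp (-s)) / 2) *
        besselI α (2 * √(exp (-s) * x * y) / (1 - exp (-s)))) := by
  have hc := one_sub_exp_neg_pos hs
  rw [heatDensity_eq_tsum (by linarith) hs hx hy, ENNReal.tsum_toReal_eq (by simp), besselI,
    ← tsum_mul_left, ← tsum_mul_left]
  refine tsum_congr fun m => ?_
  have hG : 0 < Gamma (m + (α + 1)) := Gamma_pos_of_pos (by
    have : (0 : ℝ) ≤ m := m.cast_nonneg
    linarith)
  rw [ENNReal.toReal_ofReal (by positivity)]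
  set c := 1 - exp (-s)
  have h0 : exp (-((exp (-s) * x + y) / c) - α * log (exp (-s)) / 2) =
      exp (-((exp (-s) * x + y) / c)) * exp s ^ (α / 2) := by
    rw [log_exp, ← exp_mul, ← exp_add]; ring_nf
  have h1 : exp s ^ (α / 2) * exp (-s) ^ (α / 2) = 1 := by
    rw [← exp_mul, ← exp_mul, ← exp_add]; simp [neg_mul]
  have h2 : y ^ (α + 1 - 1) = y ^ (α / 2) * y ^ (α / 2) := by rw [← rpow_add hy]; ring_nf
  have h3 : x ^ (α / 2) ≠ 0 := by positivity
  have h4 : c ^ (-(α + 1)) = (c ^ α)⁻¹ * c⁻¹ := by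
    rw [neg_add, rpow_add hc, rpow_neg hc.le, rpow_neg_one]
  have h5 : (2 * √(exp (-s) * x * y) / c / 2) ^ (2 * (m : ℝ) + α) =
      (exp (-s) * x * y / c ^ 2) ^ m * (exp (-s) ^ (α / 2) * x ^ (α / 2) * y ^ (α / 2)) *
        (c ^ α)⁻¹ := by
    have hq : √(exp (-s) * x * y) ^ 2 = exp (-s) * x * y := sq_sqrt (by positivity)
    have hα' : √(exp (-s) * x * y) ^ α = exp (-s) ^ (α / 2) * x ^ (α / 2) * y ^ (α / 2) := by
      rw [sqrt_eq_rpow, ← rpow_mul (by positivity), one_div_mul_eq_div,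
        mul_rpow (by positivity) hy.le, mul_rpow (by positivity) hx.le]
    rw [show 2 * √(exp (-s) * x * y) / c / 2 = √(exp (-s) * x * y) / c by ring,
      rpow_add (by positivity), rpow_mul (by positivity), rpow_two, rpow_natCast, div_pow, hq,
      div_rpow (by positivity) hc.le, hα', div_eq_mul_inv _ (c ^ α), ← mul_assoc]
  rw [h0, h2, h4, h5, div_rpow hy.le hx.le, add_assoc (m : ℝ)]
  calc _ = exp (-((exp (-s) * x + y) / c)) * (exp (-s) * x * y / c ^ 2) ^ m *
        (y ^ (α / 2) * y ^ (α / 2) * ((c ^ α)⁻¹ * c⁻¹)) / (m.factorial * Gamma (m + (α + 1))) *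
          (exp s ^ (α / 2) * exp (-s) ^ (α / 2)) := by rw [h1, mul_one]
    _ = _ := by field_simp

theorem lintegral_exp_neg_sq : ∫⁻ w : ℝ, ENNReal.ofReal (exp (-w ^ 2)) = ENNReal.ofReal √π := by
  have h := integral_gaussian 1
  have hi := integrable_exp_neg_mul_sq one_pos
  simp only [neg_mul, one_mul, div_one] at h hi
  rw [← ofReal_integral_eq_lintegral_ofReal hi (ae_of_all _ fun w => (exp_pos _).le), h]

theorem lintegral_Ioi_exp_neg_sq_sub_div {a b : ℝ} (ha : 0 < a) (hb : 0 < b) :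
    2 * (ENNReal.ofReal a * ∫⁻ v in Ioi 0, ENNReal.ofReal (exp (-(a * v - b / v) ^ 2))) =
      ENNReal.ofReal √π := by
  have hderiv : ∀ v ∈ Ioi (0 : ℝ), HasDerivWithinAt (fun v => a * v - b / v) (a + b / v ^ 2)
      (Ioi 0) v := fun v hv => by
    have h1 : HasDerivAt (fun v : ℝ => a * v - b * v⁻¹) (a * 1 - b * -(v ^ 2)⁻¹) v :=
      ((hasDerivAt_id v).const_mul a).sub ((hasDerivAt_inv (ne_of_gt hv)).const_mul b)
    simp only [div_eq_mul_inv]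
    exact (h1.congr_deriv (by ring)).hasDerivWithinAt
  have hmono : StrictMonoOn (fun v => a * v - b / v) (Ioi 0) := fun v hv w hw hvw => by
    have h1 : b / w < b / v := div_lt_div_of_pos_left hb hv hvw
    have h2 : a * v < a * w := mul_lt_mul_of_pos_left hvw ha
    simp only; linarith
  have himage : (fun v => a * v - b / v) '' Ioi 0 = univ := by
    refine eq_univ_of_forall fun w => ?_
    have hlt : |w| < √(w ^ 2 + 4 * a * b) := by
      rw [← sqrt_sq_eq_abs]
      exact sqrt_lt_sqrt (sq_nonneg w) (by nlinarith [mul_pos ha hb])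
    have hsq := sq_sqrt (show 0 ≤ w ^ 2 + 4 * a * b by positivity)
    set u := √(w ^ 2 + 4 * a * b)
    have hpos : 0 < w + u := by linarith [neg_abs_le w]
    refine ⟨(w + u) / (2 * a), mem_Ioi.2 (by positivity), ?_⟩
    simp only
    field_simp
    linear_combination hsq
  have hderiv' : ∀ v ∈ Ioi (0 : ℝ), HasDerivWithinAt (fun v => b / a / v) (-(b / a / v ^ 2))
      (Ioi 0) v := fun v hv => by
    have h1 := (hasDerivAt_inv (ne_of_gt hv)).const_mul (b / a)
    simp only [div_eq_mul_inv _ (_ : ℝ)] at h1 ⊢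
    exact (h1.congr_deriv (by ring)).hasDerivWithinAt
  have hinj' : InjOn (fun v => b / a / v) (Ioi 0) := fun v hv w hw hvw => by
    have hv' : v ≠ 0 := ne_of_gt hv
    have hw' : w ≠ 0 := ne_of_gt hw
    simp only at hvw
    field_simp at hvw
    exact hvw.symm
  have himage' : (fun v => b / a / v) '' Ioi 0 = Ioi 0 := by
    ext w
    constructor
    · rintro ⟨v, hv, rfl⟩
      exact div_pos (div_pos hb ha) hv
    · intro hw
      refine ⟨b / a / w, div_pos (div_pos hb ha) hw, ?_⟩
      have hw' : w ≠ 0 := ne_of_gt hw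
      simp only
      field_simp
  have hswap : ENNReal.ofReal a * ∫⁻ v in Ioi 0, ENNReal.ofReal (exp (-(a * v - b / v) ^ 2)) =
      ∫⁻ v in Ioi 0, ENNReal.ofReal (b / v ^ 2) * ENNReal.ofReal (exp (-(a * v - b / v) ^ 2)) := by
    conv_lhs => rw [← himage',
      lintegral_image_eq_lintegral_abs_deriv_mul measurableSet_Ioi hderiv' hinj']
    rw [← lintegral_const_mul _ (by fun_prop)]
    refine setLIntegral_congr_fun measurableSet_Ioi fun v hv => ?_
    have hv' : v ≠ 0 := ne_of_gt hv
    rw [← mul_assoc, ← ENNReal.ofReal_mul ha.le, abs_neg, abs_of_nonneg (by positivity)]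
    have h1 : a * (b / a / v ^ 2) = b / v ^ 2 := by field_simp
    have h2 : -(a * (b / a / v) - b / (b / a / v)) ^ 2 = -(a * v - b / v) ^ 2 := by
      field_simp; ring
    rw [h1, h2]
  have htotal := lintegral_image_eq_lintegral_abs_deriv_mul measurableSet_Ioi hderiv hmono.injOn
    fun w => ENNReal.ofReal (exp (-w ^ 2))
  rw [himage, Measure.restrict_univ, lintegral_exp_neg_sq] at htotal
  rw [htotal, two_mul]
  nth_rewrite 2 [hswap]
  rw [← lintegral_const_mul _ (by fun_prop), ← lintegral_add_left (by fun_prop)]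
  refine setLIntegral_congr_fun measurableSet_Ioi fun v hv => ?_
  rw [← add_mul, ← ENNReal.ofReal_add ha.le (by positivity), abs_of_pos (by positivity)]

/-- Density of the random variable `1 / √(4 s)`, where `s` follows the one-sided `1/2`-stable law
at time `t`. -/
noncomputable def stableDensity (t v : ℝ) : ℝ := 2 / √π * (t * exp (-(t * v) ^ 2))

@[fun_prop]
theorem measurable_stableDensity {X : Type*} [MeasurableSpace X] {f g : X → ℝ}
    (hf : Measurable f) (hg : Measurable g) : Measurable fun x => stableDensity (f x) (g x) := by
  unfold stableDensity; fun_prop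

theorem stableDensity_pos {t : ℝ} (ht : 0 < t) (v : ℝ) : 0 < stableDensity t v := by
  unfold stableDensity; positivity

theorem lintegral_stableDensity_mul_exp {t θ : ℝ} (ht : 0 < t) (hθ : 0 ≤ θ) :
    ∫⁻ v in Ioi 0, ENNReal.ofReal (stableDensity t v) *
      ENNReal.ofReal (exp (-(θ * (1 / (4 * v ^ 2))))) = ENNReal.ofReal (exp (-(t * √θ))) := by
  rcases eq_or_lt_of_le hθ with rfl | hθ
  · simp only [zero_mul, neg_zero, exp_zero, ENNReal.ofReal_one, mul_one, sqrt_zero, mul_zero]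
    have h1 : ∀ v, stableDensity t v = 2 / √π * t * exp (-(t ^ 2) * v ^ 2) := fun v => by
      simp only [stableDensity]; ring_nf
    have hi : Integrable fun v => stableDensity t v := by
      simp_rw [h1]; exact (integrable_exp_neg_mul_sq (by positivity)).const_mul _
    rw [← ofReal_integral_eq_lintegral_ofReal hi.integrableOn
      (ae_of_all _ fun v => (stableDensity_pos ht v).le)]
    simp_rw [h1]
    rw [integral_const_mul, integral_gaussian_Ioi, sqrt_div pi_pos.le, sqrt_sq ht.le]
    rw [← ENNReal.ofReal_one]
    congr 1
    field_simp
  · have h := lintegral_Ioi_exp_neg_sq_sub_div ht (show 0 < √θ / 2 by positivity)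
    have h2 : ∀ v ∈ Ioi (0 : ℝ), ENNReal.ofReal (stableDensity t v) *
        ENNReal.ofReal (exp (-(θ * (1 / (4 * v ^ 2))))) =
        ENNReal.ofReal (2 / √π * exp (-(t * √θ)) * t) *
          ENNReal.ofReal (exp (-(t * v - √θ / 2 / v) ^ 2)) := fun v hv => by
      have hv' : v ≠ 0 := ne_of_gt hv
      rw [← ENNReal.ofReal_mul (stableDensity_pos ht v).le, ← ENNReal.ofReal_mul (by positivity)]
      congr 1
      have : exp (-(t * v) ^ 2) * exp (-(θ * (1 / (4 * v ^ 2)))) =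
          exp (-(t * √θ)) * exp (-(t * v - √θ / 2 / v) ^ 2) := by
        rw [← exp_add, ← exp_add]
        congr 1
        have := sq_sqrt hθ.le
        field_simp
        linear_combination 4 * this
      unfold stableDensity
      linear_combination 2 / √π * t * this
    rw [setLIntegral_congr_fun measurableSet_Ioi h2, lintegral_const_mul _ (by fun_prop),
      ENNReal.ofReal_mul (by positivity), mul_assoc]
    have h3 : ENNReal.ofReal (2 / √π * exp (-(t * √θ))) =
        ENNReal.ofReal (exp (-(t * √θ)) / √π) * 2 := by
      rw [← ENNReal.ofReal_ofNat 2, ← ENNReal.ofReal_mul (by positivity)]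
      congr 1; ring
    rw [h3, mul_assoc, h, ← ENNReal.ofReal_mul (by positivity), div_mul_cancel₀ _ (by positivity)]

/-- The one-sided `1/2`-stable law at time `t`, with Laplace transform `exp (-t √θ)`. -/
noncomputable def stableMeasure (t : ℝ) : Measure ℝ :=
  ((volume.restrict (Ioi 0)).withDensity fun v => ENNReal.ofReal (stableDensity t v)).map
    fun v => 1 / (4 * v ^ 2)

theorem lintegral_stableMeasure (t : ℝ) {F : ℝ → ℝ≥0∞} (hF : Measurable F) :
    ∫⁻ s, F s ∂stableMeasure t =
      ∫⁻ v in Ioi 0, ENNReal.ofReal (stableDensity t v) * F (1 / (4 * v ^ 2)) := by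
  rw [stableMeasure, lintegral_map hF (by fun_prop),
    lintegral_withDensity_eq_lintegral_mul _ (by fun_prop) (by fun_prop)]
  rfl

theorem lintegral_exp_stableMeasure {t θ : ℝ} (ht : 0 < t) (hθ : 0 ≤ θ) :
    ∫⁻ s, ENNReal.ofReal (exp (-(θ * s))) ∂stableMeasure t = ENNReal.ofReal (exp (-(t * √θ))) := by
  rw [lintegral_stableMeasure t (by fun_prop), lintegral_stableDensity_mul_exp ht hθ]

theorem isProbabilityMeasure_stableMeasure {t : ℝ} (ht : 0 < t) :
    IsProbabilityMeasure (stableMeasure t) :=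
  ⟨by simpa using lintegral_exp_stableMeasure ht le_rfl⟩

theorem ae_stableMeasure_pos (t : ℝ) : ∀ᵐ s ∂stableMeasure t, 0 < s := by
  rw [stableMeasure, ae_map_iff (by fun_prop) measurableSet_Ioi]
  refine (withDensity_absolutelyContinuous _ _).ae_le ?_
  filter_upwards [ae_restrict_mem measurableSet_Ioi] with v hv
  have : (0 : ℝ) < v := hv
  positivity

theorem stableMeasure_conv {s t : ℝ} (hs : 0 < s) (ht : 0 < t) :
    (stableMeasure s).conv (stableMeasure t) = stableMeasure (s + t) := by
  have := isProbabilityMeasure_stableMeasure hs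
  have := isProbabilityMeasure_stableMeasure ht
  have := isProbabilityMeasure_stableMeasure (add_pos hs ht)
  refine measure_ext_of_lintegral_exp_neg ?_ ?_ fun n => ?_
  · rw [Measure.conv, ae_map_iff (by fun_prop) measurableSet_Ici]
    filter_upwards [Measure.quasiMeasurePreserving_fst.ae (ae_stableMeasure_pos s),
      Measure.quasiMeasurePreserving_snd.ae (ae_stableMeasure_pos t)] with p h1 h2
    exact (add_pos h1 h2).le
  · filter_upwards [ae_stableMeasure_pos (s + t)] with u hu using hu.le
  · rw [Measure.lintegral_conv (by fun_prop), lintegral_exp_stableMeasure (add_pos hs ht)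
      n.cast_nonneg]
    have h1 : ∀ x y : ℝ, ENNReal.ofReal (exp (-(n * (x + y)))) =
        ENNReal.ofReal (exp (-(n * x))) * ENNReal.ofReal (exp (-(n * y))) := fun x y => by
      rw [← ENNReal.ofReal_mul (exp_pos _).le, ← exp_add]; ring_nf
    simp_rw [h1]
    simp_rw [lintegral_const_mul _ (show Measurable fun y : ℝ =>
      ENNReal.ofReal (exp (-(n * y))) by fun_prop), lintegral_exp_stableMeasure ht n.cast_nonneg]
    rw [lintegral_mul_const _ (by fun_prop), lintegral_exp_stableMeasure hs n.cast_nonneg,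
      ← ENNReal.ofReal_mul (exp_pos _).le, ← exp_add]
    ring_nf

section

variable {d : ℕ} {a : Fin d → ℝ}

/-- The density of the `d`-dimensional Laguerre heat kernel. -/
@[irreducible] noncomputable def heatProd (a : Fin d → ℝ) (s : ℝ) (x y : Fin d → ℝ) : ℝ≥0∞ :=
  ∏ j, heatDensity (a j) s (x j) (y j)

@[fun_prop]
theorem measurable_heatProd {Ω : Type*} [MeasurableSpace Ω] {s : Ω → ℝ} {x y : Ω → Fin d → ℝ}
    (hs : Measurable s) (hx : Measurable x) (hy : Measurable y) :
    Measurable fun ω => heatProd a (s ω) (x ω) (y ω) := by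
  unfold heatProd
  exact Finset.measurable_prod _ fun j _ => measurable_heatDensity_comp hs
    ((measurable_pi_apply j).comp hx) ((measurable_pi_apply j).comp hy)

theorem lintegral_heatProd (ha : ∀ j, 0 < a j) {s : ℝ} (hs : 0 < s) (x : Fin d → ℝ) :
    ∫⁻ y, heatProd a s x y = 1 := by
  unfold heatProd
  rw [lintegral_fin_prod_eq_prod (f := fun j y => heatDensity (a j) s (x j) y)
    (fun j => by fun_prop)]
  simp [lintegral_heatDensity (ha _) hs]

/-- The heat semigroup acting on nonnegative functions. -/
@[irreducible] noncomputable def heatOp (a : Fin d → ℝ) (s : ℝ) (F : (Fin d → ℝ) → ℝ≥0∞)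
    (x : Fin d → ℝ) : ℝ≥0∞ :=
  ∫⁻ y, heatProd a s x y * F y

@[fun_prop]
theorem measurable_heatOp {Ω : Type*} [MeasurableSpace Ω] {F : (Fin d → ℝ) → ℝ≥0∞}
    (hF : Measurable F) {s : Ω → ℝ} {x : Ω → Fin d → ℝ} (hs : Measurable s) (hx : Measurable x) :
    Measurable fun ω => heatOp a (s ω) F (x ω) := by
  unfold heatOp
  exact Measurable.lintegral_prod_right'
    (f := fun p : Ω × (Fin d → ℝ) => heatProd a (s p.1) (x p.1) p.2 * F p.2) (by fun_prop)

theorem heatOp_comp (ha : ∀ j, 0 < a j) {s t : ℝ} (hs : 0 < s) (ht : 0 < t)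
    {F : (Fin d → ℝ) → ℝ≥0∞} (hF : Measurable F) (x : Fin d → ℝ) :
    heatOp a s (heatOp a t F) x = heatOp a (s + t) F x := by
  have hkernel : ∀ᵐ z : Fin d → ℝ, ∫⁻ y, heatProd a s x y * heatProd a t y z =
      heatProd a (s + t) x z := by
    have hcoord : ∀ j, ∀ᵐ z : Fin d → ℝ,
        ∫⁻ y, heatDensity (a j) s (x j) y * heatDensity (a j) t y (z j) =
          heatDensity (a j) (s + t) (x j) (z j) := fun j =>
      (Measure.tendsto_eval_ae_ae (μ := fun _ : Fin d => (volume : Measure ℝ)) (i := j)).eventually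
        (lintegral_heatDensity_comp (ha j) hs ht (x j))
    filter_upwards [ae_all_iff.2 hcoord] with z hz
    unfold heatProd
    simp_rw [← Finset.prod_mul_distrib]
    rw [lintegral_fin_prod_eq_prod
      (f := fun j y => heatDensity (a j) s (x j) y * heatDensity (a j) t y (z j))
      (fun j => by fun_prop)]
    exact Finset.prod_congr rfl fun j _ => hz j
  unfold heatOp
  calc _ = ∫⁻ y, ∫⁻ z, heatProd a s x y * heatProd a t y z * F z := by
        refine lintegral_congr fun y => ?_
        rw [← lintegral_const_mul _ (by fun_prop)]
        exact lintegral_congr fun z => (mul_assoc _ _ _).symm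
    _ = ∫⁻ z, ∫⁻ y, heatProd a s x y * heatProd a t y z * F z :=
        lintegral_lintegral_swap (by fun_prop)
    _ = _ := by
        refine lintegral_congr_ae ?_
        filter_upwards [hkernel] with z hz
        rw [lintegral_mul_const _ (by fun_prop), hz]

/-- The density of the subordinated (Poisson) kernel. -/
@[irreducible] noncomputable def poissonDensity (a : Fin d → ℝ) (t : ℝ) (x y : Fin d → ℝ) : ℝ≥0∞ :=
  ∫⁻ s, heatProd a s x y ∂stableMeasure t

theorem poissonDensity_eq (t : ℝ) (x y : Fin d → ℝ) : poissonDensity a t x y =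
    ∫⁻ v in Ioi 0, ENNReal.ofReal (stableDensity t v) * heatProd a (1 / (4 * v ^ 2)) x y := by
  unfold poissonDensity
  exact lintegral_stableMeasure t (by fun_prop)

@[fun_prop]
theorem measurable_poissonDensity {Ω : Type*} [MeasurableSpace Ω] {t : Ω → ℝ}
    {x y : Ω → Fin d → ℝ} (ht : Measurable t) (hx : Measurable x) (hy : Measurable y) :
    Measurable fun ω => poissonDensity a (t ω) (x ω) (y ω) := by
  simp_rw [poissonDensity_eq]
  exact Measurable.lintegral_prod_right' (ν := volume.restrict (Ioi 0))
    (f := fun p : Ω × ℝ => ENNReal.ofReal (stableDensity (t p.1) p.2) *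
      heatProd a (1 / (4 * p.2 ^ 2)) (x p.1) (y p.1)) (by fun_prop)

/-- The Poisson semigroup as a family of measures. -/
@[irreducible] noncomputable def poissonMeasure (a : Fin d → ℝ) (t : ℝ) (x : Fin d → ℝ) :
    Measure (Fin d → ℝ) :=
  volume.withDensity (poissonDensity a t x)

theorem sFinite_stableMeasure (t : ℝ) : SFinite (stableMeasure t) := by
  unfold stableMeasure; infer_instance

theorem lintegral_poissonMeasure (t : ℝ) (x : Fin d → ℝ) {F : (Fin d → ℝ) → ℝ≥0∞}
    (hF : Measurable F) :
    ∫⁻ y, F y ∂poissonMeasure a t x = ∫⁻ s, heatOp a s F x ∂stableMeasure t := by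
  have := sFinite_stableMeasure t
  rw [poissonMeasure, lintegral_withDensity_eq_lintegral_mul _ (by fun_prop) hF]
  simp only [Pi.mul_apply]
  unfold poissonDensity heatOp
  have h : ∀ y, (∫⁻ s, heatProd a s x y ∂stableMeasure t) * F y =
      ∫⁻ s, heatProd a s x y * F y ∂stableMeasure t := fun y =>
    (lintegral_mul_const _ (by fun_prop)).symm
  simp_rw [h]
  exact lintegral_lintegral_swap (by fun_prop)

theorem heatOp_le (ha : ∀ j, 0 < a j) {s : ℝ} (hs : 0 < s) {F : (Fin d → ℝ) → ℝ≥0∞} {B : ℝ≥0∞}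
    (hF : ∀ y, F y ≤ B) (x : Fin d → ℝ) : heatOp a s F x ≤ B := by
  unfold heatOp
  calc _ ≤ ∫⁻ y, heatProd a s x y * B := lintegral_mono fun y => by gcongr; exact hF y
    _ = B := by rw [lintegral_mul_const _ (by fun_prop), lintegral_heatProd ha hs, one_mul]

theorem isProbabilityMeasure_poissonMeasure (ha : ∀ j, 0 < a j) {t : ℝ} (ht : 0 < t)
    (x : Fin d → ℝ) : IsProbabilityMeasure (poissonMeasure a t x) := by
  have := isProbabilityMeasure_stableMeasure ht
  refine ⟨?_⟩
  rw [← lintegral_one, lintegral_poissonMeasure t x measurable_const]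
  have : ∀ᵐ s ∂stableMeasure t, heatOp a s (fun _ => 1) x = 1 := by
    filter_upwards [ae_stableMeasure_pos t] with s hs
    unfold heatOp
    simp [lintegral_heatProd ha hs]
  rw [lintegral_congr_ae this]
  simp

theorem lintegral_poissonMeasure_comp (ha : ∀ j, 0 < a j) {s t : ℝ} (hs : 0 < s) (ht : 0 < t)
    {F : (Fin d → ℝ) → ℝ≥0∞} (hF : Measurable F) (x : Fin d → ℝ) :
    ∫⁻ y, (∫⁻ z, F z ∂poissonMeasure a t y) ∂poissonMeasure a s x =
      ∫⁻ z, F z ∂poissonMeasure a (s + t) x := by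
  have := isProbabilityMeasure_stableMeasure hs
  have := isProbabilityMeasure_stableMeasure ht
  simp_rw [lintegral_poissonMeasure t _ hF]
  have hm : Measurable fun y => ∫⁻ τ, heatOp a τ F y ∂stableMeasure t :=
    Measurable.lintegral_prod_right' (f := fun p : (Fin d → ℝ) × ℝ => heatOp a p.2 F p.1)
      (by fun_prop)
  rw [lintegral_poissonMeasure s x hm, lintegral_poissonMeasure (s + t) x hF,
    ← stableMeasure_conv hs ht, Measure.lintegral_conv (by fun_prop)]
  refine lintegral_congr_ae ?_
  filter_upwards [ae_stableMeasure_pos s] with σ hσ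
  have h1 : heatOp a σ (fun y => ∫⁻ τ, heatOp a τ F y ∂stableMeasure t) x =
      ∫⁻ τ, heatOp a σ (heatOp a τ F) x ∂stableMeasure t := by
    have h : ∀ y, heatProd a σ x y * ∫⁻ τ, heatOp a τ F y ∂stableMeasure t =
        ∫⁻ τ, heatProd a σ x y * heatOp a τ F y ∂stableMeasure t := fun y =>
      (lintegral_const_mul _ (by fun_prop)).symm
    rw [heatOp]
    simp_rw [h]
    rw [lintegral_lintegral_swap (by fun_prop)]
    simp_rw [heatOp.eq_1 a σ]
  rw [h1]
  refine lintegral_congr_ae ?_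
  filter_upwards [ae_stableMeasure_pos t] with τ hτ
  exact heatOp_comp ha hσ hτ hF x

theorem poissonMeasure_of_nonpos {t : ℝ} (ht : t ≤ 0) (x : Fin d → ℝ) :
    poissonMeasure a t x = 0 := by
  have h1 : ∀ v, stableDensity t v ≤ 0 := fun v => by
    unfold stableDensity
    exact mul_nonpos_of_nonneg_of_nonpos (by positivity)
      (mul_nonpos_of_nonpos_of_nonneg ht (exp_pos _).le)
  have h2 : poissonDensity a t x = 0 := by
    ext y
    simp [poissonDensity_eq, ENNReal.ofReal_of_nonpos (h1 _)]
  rw [poissonMeasure, h2, withDensity_zero]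

theorem ae_poissonDensity_lt_top (ha : ∀ j, 0 < a j) (t : ℝ) (x : Fin d → ℝ) :
    ∀ᵐ y, poissonDensity a t x y < ∞ := by
  refine ae_lt_top (by fun_prop) ?_
  have h : poissonMeasure a t x univ ≠ ∞ := by
    rcases le_or_gt t 0 with ht | ht
    · simp [poissonMeasure_of_nonpos ht]
    · have := isProbabilityMeasure_poissonMeasure ha ht x
      simp
  rwa [poissonMeasure, withDensity_apply _ MeasurableSet.univ, Measure.restrict_univ] at h

theorem integral_poissonMeasure (ha : ∀ j, 0 < a j) (t : ℝ) (x : Fin d → ℝ)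
    (f : (Fin d → ℝ) → ℝ) :
    ∫ y, f y ∂poissonMeasure a t x = ∫ y, (poissonDensity a t x y).toReal * f y := by
  rw [poissonMeasure]
  exact integral_withDensity_eq_integral_toReal_smul (by fun_prop) (ae_poissonDensity_lt_top ha t x) f

theorem measurable_integral_poissonMeasure (ha : ∀ j, 0 < a j) {f : (Fin d → ℝ) → ℝ}
    (hf : Measurable f) :
    Measurable fun p : ℝ × (Fin d → ℝ) => ∫ z, f z ∂poissonMeasure a p.1 p.2 := by
  simp_rw [integral_poissonMeasure ha]
  refine StronglyMeasurable.measurable (StronglyMeasurable.integral_prod_right'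
    (f := fun q : (ℝ × (Fin d → ℝ)) × (Fin d → ℝ) =>
      (poissonDensity a q.1.1 q.1.2 q.2).toReal * f q.2) ?_)
  exact Measurable.stronglyMeasurable (by fun_prop)

theorem integral_eq_toReal_lintegral_add_sub {E : Type*} [MeasurableSpace E] {μ : Measure E}
    [IsProbabilityMeasure μ] {f : E → ℝ} {M : ℝ} (hf : Measurable f) (hM : ∀ z, |f z| ≤ M) :
    ∫ z, f z ∂μ = (∫⁻ z, ENNReal.ofReal (f z + M) ∂μ).toReal - M := by
  have hi : Integrable f μ := Integrable.of_bound hf.aestronglyMeasurable M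
    (ae_of_all _ fun z => hM z)
  rw [← integral_eq_lintegral_of_nonneg_ae
    (ae_of_all _ fun z => by simpa using (by linarith [neg_abs_le (f z), hM z] : 0 ≤ f z + M))
    (by fun_prop), integral_add hi (integrable_const _)]
  simp

end

section

theorem hasDerivAt_stableDensity (t v : ℝ) : HasDerivAt (fun τ => stableDensity τ v)
    (2 / √π * ((1 - 2 * (t * v) ^ 2) * exp (-(t * v) ^ 2))) t := by
  unfold stableDensity
  have h1 : HasDerivAt (fun τ : ℝ => -(τ * v) ^ 2) (-(2 * (t * v) * v)) t := by
    exact ((((hasDerivAt_id t).mul_const v).pow 2).neg).congr_deriv (by simp)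
  have h2 := ((hasDerivAt_id t).mul h1.exp).const_mul (2 / √π)
  refine h2.congr_deriv ?_
  simp only [id]
  ring

theorem abs_deriv_stableDensity_le {t τ v : ℝ} (ht : 0 ≤ t) (hτ : t ≤ τ) :
    |2 / √π * ((1 - 2 * (τ * v) ^ 2) * exp (-(τ * v) ^ 2))| ≤
      8 / √π * exp (-(t ^ 2 / 2) * v ^ 2) := by
  set w := (τ * v) ^ 2 with hw
  have hw0 : 0 ≤ w := sq_nonneg _
  have h1 : |1 - 2 * w| ≤ 4 * exp (w / 2) := by
    have := add_one_le_exp (w / 2)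
    rw [abs_le]; constructor <;> linarith
  have h2 : exp (-(w / 2)) ≤ exp (-(t ^ 2 / 2) * v ^ 2) := by
    rw [exp_le_exp, hw, mul_pow]
    have : t ^ 2 * v ^ 2 ≤ τ ^ 2 * v ^ 2 := by gcongr
    linarith
  rw [abs_mul, abs_mul, abs_of_pos (exp_pos _), abs_of_pos (by positivity)]
  calc 2 / √π * (|1 - 2 * w| * exp (-w)) ≤ 2 / √π * (4 * exp (w / 2) * exp (-w)) := by gcongr
    _ = 8 / √π * exp (-(w / 2)) := by
        rw [mul_assoc 4, ← exp_add]; ring_nf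
    _ ≤ _ := by gcongr

theorem integrable_stableDensity {t : ℝ} (ht : 0 < t) : Integrable (stableDensity t) := by
  have : stableDensity t = fun v => 2 / √π * t * exp (-(t ^ 2) * v ^ 2) := by
    ext v; simp only [stableDensity]; ring_nf
  rw [this]
  exact (integrable_exp_neg_mul_sq (by positivity)).const_mul _

theorem integral_stableDensity_mul_deriv {h : ℝ → ℝ} {B t : ℝ} (hh : Measurable h)
    (hB : ∀ v ∈ Ioi (0 : ℝ), |h v| ≤ B) (ht : 0 < t) :
    DifferentiableAt ℝ (fun τ => ∫ v in Ioi 0, stableDensity τ v * h v) t ∧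
      |deriv (fun τ => ∫ v in Ioi 0, stableDensity τ v * h v) t| ≤ 8 * B / t := by
  have hB0 : 0 ≤ B := (abs_nonneg _).trans (hB 1 (by simp))
  have hae : ∀ᵐ v ∂volume.restrict (Ioi (0 : ℝ)), |h v| ≤ B := by
    filter_upwards [ae_restrict_mem measurableSet_Ioi] with v hv using hB v hv
  have hbound : ∀ r : ℝ, 0 ≤ r → ∀ τ, r ≤ τ → ∀ v, |h v| ≤ B →
      ‖2 / √π * ((1 - 2 * (τ * v) ^ 2) * exp (-(τ * v) ^ 2)) * h v‖ ≤
        8 / √π * exp (-(r ^ 2 / 2) * v ^ 2) * B := fun r hr τ hτ v hv => by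
    rw [norm_mul]
    exact mul_le_mul (abs_deriv_stableDensity_le hr hτ) hv (norm_nonneg _) (by positivity)
  have h_int : ∀ r : ℝ, 0 < r → Integrable (fun v => 8 / √π * exp (-(r ^ 2 / 2) * v ^ 2) * B)
      (volume.restrict (Ioi 0)) := fun r hr =>
    (((integrable_exp_neg_mul_sq (by positivity)).const_mul _).mul_const _).integrableOn
  have hderiv := (hasDerivAt_integral_of_dominated_loc_of_deriv_le (μ := volume.restrict (Ioi 0))
    (F := fun τ v => stableDensity τ v * h v)
    (F' := fun τ v => 2 / √π * ((1 - 2 * (τ * v) ^ 2) * exp (-(τ * v) ^ 2)) * h v)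
    (bound := fun v => 8 / √π * exp (-((t / 2) ^ 2 / 2) * v ^ 2) * B)
    (Ioi_mem_nhds (half_lt_self ht))
    (Eventually.of_forall fun τ => by fun_prop)
    ((integrable_stableDensity ht).integrableOn.mul_bdd (by fun_prop) hae) (by fun_prop)
    (by filter_upwards [hae] with v hv τ hτ using hbound _ (by positivity) τ (le_of_lt hτ) v hv)
    (h_int _ (by positivity))
    (ae_of_all _ fun v τ _ => (hasDerivAt_stableDensity τ v).mul_const _)).2
  refine ⟨hderiv.differentiableAt, ?_⟩
  rw [hderiv.deriv]
  refine (norm_integral_le_of_norm_le (h_int t ht)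
    (by filter_upwards [hae] with v hv using hbound t ht.le t le_rfl v hv)).trans ?_
  rw [integral_mul_const, integral_const_mul, integral_gaussian_Ioi]
  have h1 : √(π / (t ^ 2 / 2)) ≤ 2 * (√π / t) := by
    rw [sqrt_le_iff]
    refine ⟨by positivity, ?_⟩
    rw [mul_pow, div_pow, sq_sqrt pi_pos.le]
    have : 0 ≤ π / t ^ 2 := by positivity
    calc π / (t ^ 2 / 2) = 2 * (π / t ^ 2) := by field_simp
      _ ≤ _ := by linarith
  calc 8 / √π * (√(π / (t ^ 2 / 2)) / 2) * B ≤ 8 / √π * (2 * (√π / t) / 2) * B := by gcongr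
    _ = 8 * B / t := by field_simp

variable {d : ℕ} {a : Fin d → ℝ}

theorem lintegral_ofReal_poissonMeasure_eq (ha : ∀ j, 0 < a j) {f : (Fin d → ℝ) → ℝ} {M t : ℝ}
    (hf : Measurable f) (hM : ∀ z, |f z| ≤ M) (ht : 0 < t) (x : Fin d → ℝ) :
    (∫⁻ z, ENNReal.ofReal (f z + M) ∂poissonMeasure a t x).toReal =
      ∫ v in Ioi 0, stableDensity t v *
        (heatOp a (1 / (4 * v ^ 2)) (fun z => ENNReal.ofReal (f z + M)) x).toReal := by
  rw [lintegral_poissonMeasure t x (by fun_prop), lintegral_stableMeasure t (by fun_prop)]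
  rw [← integral_toReal (by fun_prop)]
  · refine integral_congr_ae (ae_of_all _ fun v => ?_)
    simp only [ENNReal.toReal_mul, ENNReal.toReal_ofReal (stableDensity_pos ht v).le]
  · filter_upwards [ae_restrict_mem measurableSet_Ioi] with v hv
    have hv' : (0 : ℝ) < v := hv
    refine ENNReal.mul_lt_top ENNReal.ofReal_lt_top ((heatOp_le ha (by positivity)
      (B := ENNReal.ofReal (2 * M)) (fun z => ?_) x).trans_lt ENNReal.ofReal_lt_top)
    exact ENNReal.ofReal_le_ofReal (by linarith [le_abs_self (f z), hM z])

theorem integral_poissonMeasure_comp (ha : ∀ j, 0 < a j) {f : (Fin d → ℝ) → ℝ} {M s t : ℝ}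
    (hf : Measurable f) (hM : ∀ z, |f z| ≤ M) (hs : 0 < s) (ht : 0 < t) (x : Fin d → ℝ) :
    ∫ y, (∫ z, f z ∂poissonMeasure a t y) ∂poissonMeasure a s x =
      ∫ z, f z ∂poissonMeasure a (s + t) x := by
  have h1 : ∀ y, |∫ z, f z ∂poissonMeasure a t y| ≤ M := fun y => by
    have := isProbabilityMeasure_poissonMeasure ha ht y
    simpa using norm_integral_le_of_norm_le_const (μ := poissonMeasure a t y) (f := f)
      (ae_of_all _ hM)
  have h2 : ∀ y, ENNReal.ofReal ((∫ z, f z ∂poissonMeasure a t y) + M) =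
      ∫⁻ z, ENNReal.ofReal (f z + M) ∂poissonMeasure a t y := fun y => by
    have := isProbabilityMeasure_poissonMeasure ha ht y
    rw [integral_eq_toReal_lintegral_add_sub (μ := poissonMeasure a t y) hf hM, sub_add_cancel,
      ENNReal.ofReal_toReal]
    refine ((lintegral_mono (g := fun _ => ENNReal.ofReal (2 * M)) fun z =>
      ENNReal.ofReal_le_ofReal ?_).trans_lt (by
        rw [lintegral_const, measure_univ, mul_one]; exact ENNReal.ofReal_lt_top)).ne
    linarith [le_abs_self (f z), hM z]
  have := isProbabilityMeasure_poissonMeasure ha hs x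
  have := isProbabilityMeasure_poissonMeasure ha (add_pos hs ht) x
  have hm : Measurable fun y => ∫ z, f z ∂poissonMeasure a t y :=
    (measurable_integral_poissonMeasure ha hf).comp (measurable_const.prodMk measurable_id)
  rw [integral_eq_toReal_lintegral_add_sub hm h1,
    integral_eq_toReal_lintegral_add_sub (μ := poissonMeasure a (s + t) x) hf hM,
    lintegral_congr h2, lintegral_poissonMeasure_comp ha hs ht (by fun_prop)]

theorem integral_poissonMeasure_deriv (ha : ∀ j, 0 < a j) {f : (Fin d → ℝ) → ℝ} {M t : ℝ}
    (hf : Measurable f) (hM : ∀ z, |f z| ≤ M) (ht : 0 < t) (x : Fin d → ℝ) :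
    DifferentiableAt ℝ (fun τ => ∫ z, f z ∂poissonMeasure a τ x) t ∧
      |deriv (fun τ => ∫ z, f z ∂poissonMeasure a τ x) t| ≤ 16 * M / t := by
  have heq : (fun τ => ∫ z, f z ∂poissonMeasure a τ x) =ᶠ[𝓝 t]
      fun τ => (∫ v in Ioi 0, stableDensity τ v *
        (heatOp a (1 / (4 * v ^ 2)) (fun z => ENNReal.ofReal (f z + M)) x).toReal) - M := by
    filter_upwards [Ioi_mem_nhds ht] with τ hτ
    have := isProbabilityMeasure_poissonMeasure ha hτ x
    rw [integral_eq_toReal_lintegral_add_sub hf hM,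
      lintegral_ofReal_poissonMeasure_eq ha hf hM hτ]
  have hM0 : 0 ≤ M := (abs_nonneg _).trans (hM x)
  obtain ⟨h1, h2⟩ := integral_stableDensity_mul_deriv (B := 2 * M)
    (h := fun v => (heatOp a (1 / (4 * v ^ 2)) (fun z => ENNReal.ofReal (f z + M)) x).toReal)
    (by fun_prop) (fun v hv => by
      have hv' : (0 : ℝ) < v := hv
      rw [abs_of_nonneg ENNReal.toReal_nonneg]
      refine ENNReal.toReal_le_of_le_ofReal (by positivity)
        (heatOp_le ha (by positivity) (fun z => ?_) x)
      exact ENNReal.ofReal_le_ofReal (by linarith [le_abs_self (f z), hM z])) ht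
  refine ⟨(h1.sub_const M).congr_of_eventuallyEq heq, ?_⟩
  rw [heq.deriv_eq, deriv_sub_const]
  exact h2.trans_eq (by ring)

theorem isAnalyticFlow_poissonMeasure (ha : ∀ j, 0 < a j) :
    IsAnalyticFlow (poissonMeasure a) 16 where
  prob _ ht x := isProbabilityMeasure_poissonMeasure ha ht x
  meas _ hf := measurable_integral_poissonMeasure ha hf
  comp _ _ hf hM _ hs _ ht x := integral_poissonMeasure_comp ha hf hM hs ht x
  nonneg := by norm_num
  deriv _ _ hf hM _ ht x := integral_poissonMeasure_deriv ha hf hM ht x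

end

section

theorem image_exp_neg_inv_sq_Ioi :
    (fun v : ℝ => exp (-(1 / (4 * v ^ 2)))) '' Ioi 0 = Ioo 0 1 := by
  ext r
  constructor
  · rintro ⟨v, hv, rfl⟩
    have hv : 0 < v := hv
    exact ⟨exp_pos _, exp_lt_one_iff.2 (neg_lt_zero.2 (by positivity))⟩
  · rintro ⟨h0, h1⟩
    have hl : 0 < -log r := neg_pos.2 (log_neg h0 h1)
    refine ⟨√(1 / (4 * -log r)), sqrt_pos.2 (by positivity), ?_⟩
    have : -(1 / (4 * √(1 / (4 * -log r)) ^ 2)) = log r := by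
      rw [sq_sqrt (by positivity)]; field_simp
    simp only [this, exp_log h0]

theorem injOn_exp_neg_inv_sq : InjOn (fun v : ℝ => exp (-(1 / (4 * v ^ 2)))) (Ioi 0) := by
  intro v hv w hw h
  have hv : 0 < v := hv
  have hw : 0 < w := hw
  have h1 : 1 / (4 * v ^ 2) = 1 / (4 * w ^ 2) := neg_injective (exp_injective h)
  field_simp at h1
  exact ((sq_eq_sq₀ hw.le hv.le).1 h1).symm

theorem integral_Ioo_eq_integral_exp_neg_inv_sq (F : ℝ → ℝ) :
    ∫ r in Ioo (0 : ℝ) 1, F r = ∫ v in Ioi (0 : ℝ),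
      exp (-(1 / (4 * v ^ 2))) / (2 * v ^ 3) * F (exp (-(1 / (4 * v ^ 2)))) := by
  rw [← image_exp_neg_inv_sq_Ioi, integral_image_eq_integral_abs_deriv_smul measurableSet_Ioi
    (f' := fun v => exp (-(1 / (4 * v ^ 2))) / (2 * v ^ 3)) ?_ injOn_exp_neg_inv_sq]
  · refine setIntegral_congr_fun measurableSet_Ioi fun v hv => ?_
    have hv : 0 < v := hv
    simp only [smul_eq_mul]
    rw [abs_of_pos (by positivity)]
  · intro v hv
    have hv : 0 < v := hv
    have h := (((hasDerivAt_pow 2 v).const_mul 4).fun_inv (by positivity)).neg.exp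
    refine (h.congr_deriv ?_).hasDerivWithinAt.congr_of_eventuallyEq ?_ ?_
    · simp only [Pi.neg_apply, one_div]
      push_cast
      field_simp
      norm_num
    · exact Eventually.of_forall fun w => by simp
    · simp

variable {d : ℕ}

theorem plKernel_eq_toReal_poissonDensity {α : Fin d → ℝ} (hα : ∀ j, -1 < α j) {t : ℝ} (ht : 0 < t)
    {x y : Fin d → ℝ} (hx : x ∈ posOrthant d) (hy : y ∈ posOrthant d)
    (hlt : poissonDensity (fun j => α j + 1) t x y < ∞) :
    plKernel d α t x y = (poissonDensity (fun j => α j + 1) t x y).toReal := by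
  have hx : ∀ j, 0 < x j := fun j => hx j (mem_univ j)
  have hy : ∀ j, 0 < y j := fun j => hy j (mem_univ j)
  rw [poissonDensity_eq] at hlt ⊢
  rw [← integral_toReal (by fun_prop) (ae_lt_top (by fun_prop) hlt.ne), plKernel,
    integral_Ioo_eq_integral_exp_neg_inv_sq, ← integral_const_mul]
  refine setIntegral_congr_fun measurableSet_Ioi fun v hv => ?_
  have hv : 0 < v := hv
  have hs : 0 < 1 / (4 * v ^ 2) := by positivity
  have hpi := sqrt_pos.2 pi_pos
  rw [ENNReal.toReal_mul, ENNReal.toReal_ofReal (stableDensity_pos ht v).le, heatProd,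
    ENNReal.toReal_prod]
  simp_rw [toReal_heatDensity (hα _) hs (hx _) (hy _)]
  have hc := one_sub_exp_neg_pos hs
  have h32 : (1 / (4 * v ^ 2)) ^ ((3 : ℝ) / 2) = 1 / (8 * v ^ 3) := by
    have : (1 / (4 * v ^ 2)) = (1 / (2 * v)) ^ (2 : ℝ) := by
      rw [rpow_two]; field_simp; norm_num
    rw [this, ← rpow_mul (by positivity)]
    norm_num
    field_simp
    norm_num
  have hexp : t ^ 2 / (4 * -(1 / (4 * v ^ 2))) = -(t * v) ^ 2 := by field_simp
  rw [Finset.prod_mul_distrib (f := fun _ => (1 - exp (-(1 / (4 * v ^ 2))))⁻¹), Finset.prod_const,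
    Finset.card_univ, Fintype.card_fin, stableDensity]
  simp only [log_exp, neg_neg]
  rw [hexp, h32]
  have he := exp_pos (-(1 / (4 * v ^ 2)))
  generalize exp (-(1 / (4 * v ^ 2))) = r at *
  generalize ∏ j : Fin d, (_ : ℝ) = Q
  rw [inv_pow]
  have hcd := pow_pos hc d
  field_simp
  ring

theorem ae_mem_posOrthant_poissonMeasure {a : Fin d → ℝ} (t : ℝ) (x : Fin d → ℝ) :
    ∀ᵐ y ∂poissonMeasure a t x, y ∈ posOrthant d := by
  rw [poissonMeasure, ae_withDensity_iff (by fun_prop)]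
  have h0 : ∀ j, ∀ᵐ y : Fin d → ℝ, y j ≠ 0 := fun j =>
    (Measure.tendsto_eval_ae_ae (μ := fun _ : Fin d => (volume : Measure ℝ)) (i := j)).eventually
      (Measure.ae_ne volume 0)
  filter_upwards [ae_all_iff.2 h0] with y hy hne j _
  by_contra hj
  have hj : y j < 0 := lt_of_le_of_ne (not_lt.1 hj) (hy j)
  refine hne ?_
  have : ∀ s, heatProd a s x y = 0 := fun s => by
    unfold heatProd
    exact Finset.prod_eq_zero (Finset.mem_univ j) (heatDensity_of_neg hj)
  simp [poissonDensity_eq, this]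

theorem measurableSet_posOrthant : MeasurableSet (posOrthant d) :=
  MeasurableSet.univ_pi fun _ => measurableSet_Ioi

theorem plP_eq_integral_poissonMeasure {α : Fin d → ℝ} (hα : ∀ j, -1 < α j) {t : ℝ} (ht : 0 < t)
    {x : Fin d → ℝ} (hx : x ∈ posOrthant d) (f : (Fin d → ℝ) → ℝ) :
    plP d α t f x = ∫ y, f y ∂poissonMeasure (fun j => α j + 1) t x := by
  have ha : ∀ j, 0 < α j + 1 := fun j => by linarith [hα j]
  rw [integral_poissonMeasure ha, plP, if_neg ht.ne', ← integral_indicator measurableSet_posOrthant]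
  have h := ae_mem_posOrthant_poissonMeasure (a := fun j => α j + 1) t x
  rw [poissonMeasure, ae_withDensity_iff (by fun_prop)] at h
  refine integral_congr_ae ?_
  filter_upwards [h, ae_poissonDensity_lt_top ha t x] with y hy hlt
  by_cases hm : y ∈ posOrthant d
  · rw [indicator_of_mem hm, plKernel_eq_toReal_poissonDensity hα ht hx hm hlt]
  · rw [indicator_of_notMem hm, not_imp_comm.1 hy hm]
    simp

end

section

theorem tendsto_integral_of_tendsto_comap {E ι : Type*} [MeasurableSpace E] {l : Filter ι}
    {μ : ι → Measure E} {ψ φ : E → ℝ} {B b : ℝ}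
    (hμ : ∀ᶠ i in l, IsProbabilityMeasure (μ i)) (hψ : Measurable ψ) (hψ0 : ∀ z, 0 ≤ ψ z)
    (hlim : Tendsto (fun i => ∫⁻ z, ENNReal.ofReal (ψ z) ∂μ i) l (𝓝 0))
    (hφ : Measurable φ) (hB : ∀ z, |φ z| ≤ B) (hb : |b| ≤ B)
    (hφb : Tendsto φ (comap ψ (𝓝 0)) (𝓝 b)) :
    Tendsto (fun i => ∫ z, φ z ∂μ i) l (𝓝 b) := by
  rw [Metric.tendsto_nhds]
  intro ε hε
  obtain ⟨U, hU, hUφ⟩ := (hφb.eventually (Metric.ball_mem_nhds b (half_pos hε)))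
  obtain ⟨δ, hδ, hδU⟩ := Metric.mem_nhds_iff.1 hU
  have hB0 : 0 ≤ B := (abs_nonneg b).trans hb
  have hle : ∀ z, |φ z - b| ≤ ε / 2 + 2 * B / δ * ψ z := by
    intro z
    rcases lt_or_ge (ψ z) δ with h | h
    · have h1 : |φ z - b| < ε / 2 := by
        refine hUφ (hδU ?_ : ψ z ∈ U)
        simpa [abs_of_nonneg (hψ0 z)] using h
      have := mul_nonneg (by positivity : 0 ≤ 2 * B / δ) (hψ0 z)
      linarith
    · have h1 : |φ z - b| ≤ 2 * B := (abs_sub _ _).trans (by linarith [hB z])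
      have h2 : 2 * B ≤ 2 * B / δ * ψ z := by
        rw [div_mul_eq_mul_div, le_div_iff₀ hδ]; gcongr
      linarith
  have hev : ∀ᶠ i in l, ENNReal.ofReal (2 * B / δ) * ∫⁻ z, ENNReal.ofReal (ψ z) ∂μ i <
      ENNReal.ofReal (ε / 2) := by
    have h := ENNReal.Tendsto.const_mul hlim (a := ENNReal.ofReal (2 * B / δ)) (by simp)
    rw [mul_zero] at h
    exact h.eventually_lt_const (by simpa using hε)
  filter_upwards [hμ, hev] with i _ hi
  have h_int : Integrable φ (μ i) := Integrable.of_bound hφ.aestronglyMeasurable B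
    (ae_of_all _ fun z => hB z)
  have h1 : ENNReal.ofReal (dist (∫ z, φ z ∂μ i) b) < ENNReal.ofReal ε := by
    calc ENNReal.ofReal (dist (∫ z, φ z ∂μ i) b) = ‖∫ z, (φ z - b) ∂μ i‖ₑ := by
          rw [integral_sub h_int (integrable_const b)]
          rw [dist_eq_norm, ofReal_norm]
          simp
      _ ≤ ∫⁻ z, ‖φ z - b‖ₑ ∂μ i := enorm_integral_le_lintegral_enorm _
      _ ≤ ∫⁻ z, (ENNReal.ofReal (ε / 2) + ENNReal.ofReal (2 * B / δ) * ENNReal.ofReal (ψ z))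
            ∂μ i := by
          refine lintegral_mono fun z => ?_
          rw [← ENNReal.ofReal_mul (by positivity), ← ENNReal.ofReal_add (by positivity)
            (mul_nonneg (by positivity) (hψ0 z)), ← ofReal_norm]
          exact ENNReal.ofReal_le_ofReal (hle z)
      _ = ENNReal.ofReal (ε / 2) +
            ENNReal.ofReal (2 * B / δ) * ∫⁻ z, ENNReal.ofReal (ψ z) ∂μ i := by
          rw [lintegral_add_left measurable_const, lintegral_const_mul _ (by fun_prop)]
          simp
      _ < ENNReal.ofReal (ε / 2) + ENNReal.ofReal (ε / 2) := by
          exact ENNReal.add_lt_add_left (by simp) hi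
      _ = ENNReal.ofReal ε := by
          rw [← ENNReal.ofReal_add (by positivity) (by positivity), add_halves]
  exact (ENNReal.ofReal_lt_ofReal_iff hε).1 h1

theorem lintegral_sq_mul_heatDensity_le {a s : ℝ} (ha : 0 < a) (hs : 0 < s) (x : ℝ) (hx : 0 < x) :
    ∫⁻ y, ENNReal.ofReal ((exp (-y) - exp (-x)) ^ 2) * heatDensity a s x y ≤
      ENNReal.ofReal (exp (-x) ^ 2 * (exp (6 * x) + 2 * a) * (1 - exp (-s))) := by
  have hc := one_sub_exp_neg_pos hs
  have hc1 : 1 - exp (-s) ≤ 1 := by linarith [exp_pos (-s)]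
  have L1 := lintegral_exp_mul_heatDensity ha hs zero_le_one x
  have L2 := lintegral_exp_mul_heatDensity ha hs zero_le_two x
  rw [abs_of_pos hx] at L1 L2
  have hes : exp (-s) = 1 - (1 - exp (-s)) := by ring
  generalize hcdef : 1 - exp (-s) = c at *
  rw [hes] at L1 L2
  have hsum : (∫⁻ y, ENNReal.ofReal ((exp (-y) - exp (-x)) ^ 2) * heatDensity a s x y) +
      ENNReal.ofReal (2 * exp (-x)) *
        ∫⁻ y, ENNReal.ofReal (exp (-(1 * y))) * heatDensity a s x y =
      (∫⁻ y, ENNReal.ofReal (exp (-(2 * y))) * heatDensity a s x y) +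
        ENNReal.ofReal (exp (-x) ^ 2) * ∫⁻ y, heatDensity a s x y := by
    rw [← lintegral_const_mul _ (by fun_prop), ← lintegral_const_mul _ (by fun_prop),
      ← lintegral_add_left (by fun_prop), ← lintegral_add_left (by fun_prop)]
    refine lintegral_congr fun y => ?_
    rw [← mul_assoc, ← add_mul, ← add_mul, ← ENNReal.ofReal_mul (by positivity),
      ← ENNReal.ofReal_add (by positivity) (by positivity),
      ← ENNReal.ofReal_add (by positivity) (by positivity)]
    have : exp (-(2 * y)) = exp (-y) ^ 2 := by rw [← exp_nat_mul]; push_cast; ring_nf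
    rw [this, one_mul]
    ring_nf
  rw [L1, L2, lintegral_heatDensity ha hs, mul_one, ← ENNReal.ofReal_mul (by positivity),
    ← ENNReal.ofReal_add (by positivity) (by positivity)] at hsum
  rw [ENNReal.eq_sub_of_add_eq ENNReal.ofReal_ne_top hsum, ← ENNReal.ofReal_sub _ (by positivity)]
  refine ENNReal.ofReal_le_ofReal ?_
  have h1 : (1 - a * c) * exp (-x) ≤
      (1 + 1 * c) ^ (-a) * exp (-(1 * (1 - c) * x / (1 + 1 * c))) := by
    have e1 : 1 - a * c ≤ (1 + 1 * c) ^ (-a) := by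
      rw [rpow_def_of_pos (by positivity)]
      have := log_le_sub_one_of_pos (by positivity : 0 < 1 + 1 * c)
      have := add_one_le_exp (log (1 + 1 * c) * -a)
      nlinarith
    have e2 : exp (-x) ≤ exp (-(1 * (1 - c) * x / (1 + 1 * c))) := by
      refine exp_le_exp.2 (neg_le_neg ?_)
      rw [div_le_iff₀ (by positivity)]
      nlinarith
    exact mul_le_mul e1 e2 (exp_pos _).le (by positivity)
  have h2 : (1 + 2 * c) ^ (-a) * exp (-(2 * (1 - c) * x / (1 + 2 * c))) ≤
      exp (-x) ^ 2 * (1 + c * exp (6 * x)) := by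
    have e1 : (1 + 2 * c) ^ (-a) ≤ 1 :=
      rpow_le_one_of_one_le_of_nonpos (by linarith) (by linarith)
    have e2 : exp (-(2 * (1 - c) * x / (1 + 2 * c))) ≤ exp (-x) ^ 2 * exp (6 * c * x) := by
      rw [← exp_nat_mul, ← exp_add, exp_le_exp, neg_le, le_div_iff₀ (by positivity)]
      push_cast
      nlinarith [mul_pos hc hx, mul_pos (mul_pos hc hx) hc]
    have e3 : exp (6 * c * x) ≤ 1 + c * exp (6 * x) := by
      have := convexOn_exp.2 (mem_univ 0) (mem_univ (6 * x)) (sub_nonneg.2 hc1) hc.le (by ring)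
      simp only [smul_eq_mul, mul_zero, zero_add, exp_zero, mul_one] at this
      calc exp (6 * c * x) = exp (c * (6 * x)) := by ring_nf
        _ ≤ _ := this
        _ ≤ _ := by linarith
    calc _ ≤ 1 * (exp (-x) ^ 2 * (1 + c * exp (6 * x))) := by
          refine mul_le_mul e1 (e2.trans ?_) (exp_pos _).le zero_le_one
          gcongr
      _ = _ := one_mul _
  have h3 := mul_le_mul_of_nonneg_left h1 (by positivity : 0 ≤ 2 * exp (-x))
  nlinarith

theorem lintegral_one_sub_exp_stableMeasure {t : ℝ} (ht : 0 < t) :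
    ∫⁻ s, ENNReal.ofReal (1 - exp (-s)) ∂stableMeasure t = ENNReal.ofReal (1 - exp (-t)) := by
  have := isProbabilityMeasure_stableMeasure ht
  have h1 := lintegral_exp_stableMeasure ht zero_le_one
  rw [sqrt_one, mul_one] at h1
  have h2 : ∫⁻ s, ENNReal.ofReal (1 - exp (-s)) ∂stableMeasure t +
      ∫⁻ s, ENNReal.ofReal (exp (-(1 * s))) ∂stableMeasure t = 1 := by
    rw [← lintegral_add_left (by fun_prop)]
    have : ∀ᵐ s ∂stableMeasure t,
        ENNReal.ofReal (1 - exp (-s)) + ENNReal.ofReal (exp (-(1 * s))) = 1 := by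
      filter_upwards [ae_stableMeasure_pos t] with s hs
      rw [← ENNReal.ofReal_add (one_sub_exp_neg_pos hs).le (by positivity)]
      simp
    rw [lintegral_congr_ae this]
    simp
  rw [h1] at h2
  rw [ENNReal.eq_sub_of_add_eq ENNReal.ofReal_ne_top h2, ENNReal.ofReal_sub _ (by positivity),
    ENNReal.ofReal_one]

variable {d : ℕ} {a : Fin d → ℝ}

theorem heatOp_coord (ha : ∀ j, 0 < a j) {s : ℝ} (hs : 0 < s) {F : ℝ → ℝ≥0∞} (hF : Measurable F)
    (j : Fin d) (x : Fin d → ℝ) :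
    heatOp a s (fun y => F (y j)) x = ∫⁻ y, F y * heatDensity (a j) s (x j) y := by
  have h : ∀ y : Fin d → ℝ, heatProd a s x y * F (y j) =
      ∏ i, (if i = j then F (y i) else 1) * heatDensity (a i) s (x i) (y i) := fun y => by
    rw [Finset.prod_mul_distrib, heatProd, mul_comm]
    simp
  unfold heatOp
  simp_rw [h]
  rw [lintegral_fin_prod_eq_prod
    (f := fun i y => (if i = j then F y else 1) * heatDensity (a i) s (x i) y)
    (fun i => by split_ifs <;> fun_prop), Finset.prod_eq_single j]
  · simp
  · intro i _ hi
    simp [hi, lintegral_heatDensity (ha i) hs]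
  · simp

theorem tendsto_integral_poissonMeasure (ha : ∀ j, 0 < a j) {x : Fin d → ℝ}
    (hx : x ∈ posOrthant d) {φ : (Fin d → ℝ) → ℝ} {B : ℝ} (hφ : Continuous φ)
    (hB : ∀ z, |φ z| ≤ B) :
    Tendsto (fun t => ∫ z, φ z ∂poissonMeasure a t x) (𝓝[>] 0) (𝓝 (φ x)) := by
  have hx : ∀ j, 0 < x j := fun j => hx j (mem_univ j)
  set ψ : (Fin d → ℝ) → ℝ := fun z => ∑ j, (exp (-z j) - exp (-x j)) ^ 2 with hψdef
  have hψ0 : ∀ z, 0 ≤ ψ z := fun z => Finset.sum_nonneg fun j _ => sq_nonneg _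
  refine tendsto_integral_of_tendsto_comap (ψ := ψ) ?_ (by fun_prop) hψ0 ?_ hφ.measurable hB (hB x) ?_
  · filter_upwards [self_mem_nhdsWithin] with t ht
    exact isProbabilityMeasure_poissonMeasure ha ht x
  · set K : Fin d → ℝ := fun j => exp (-x j) ^ 2 * (exp (6 * x j) + 2 * a j)
    have hbound : ∀ t > 0, ∫⁻ z, ENNReal.ofReal (ψ z) ∂poissonMeasure a t x ≤
        ∑ j, ENNReal.ofReal (K j) * ENNReal.ofReal (1 - exp (-t)) := by
      intro t ht
      simp_rw [hψdef, ENNReal.ofReal_sum_of_nonneg fun _ _ => sq_nonneg _]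
      rw [lintegral_finsetSum _ fun j _ => by fun_prop]
      refine Finset.sum_le_sum fun j _ => ?_
      have hm : Measurable fun z : ℝ => ENNReal.ofReal ((exp (-z) - exp (-x j)) ^ 2) := by fun_prop
      rw [lintegral_poissonMeasure (F := fun z => ENNReal.ofReal ((exp (-z j) - exp (-x j)) ^ 2)) t x
        (by fun_prop),
        ← lintegral_one_sub_exp_stableMeasure ht, ← lintegral_const_mul _ (by fun_prop)]
      refine lintegral_mono_ae ?_
      filter_upwards [ae_stableMeasure_pos t] with s hs
      have := ha j
      rw [← ENNReal.ofReal_mul (by positivity)]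
      exact (heatOp_coord ha hs hm j x).trans_le
        (lintegral_sq_mul_heatDensity_le (ha j) hs (x j) (hx j))
    have hlim : Tendsto (fun t : ℝ => ∑ j, ENNReal.ofReal (K j) * ENNReal.ofReal (1 - exp (-t)))
        (𝓝[>] 0) (𝓝 0) := by
      rw [show (𝓝 (0 : ℝ≥0∞)) = 𝓝 (∑ j : Fin d, 0) by simp]
      refine tendsto_finsetSum _ fun j _ => ?_
      have h1 : Tendsto (fun t : ℝ => 1 - exp (-t)) (𝓝[>] 0) (𝓝 0) := by
        have : Continuous fun t : ℝ => 1 - exp (-t) := by fun_prop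
        simpa using (this.tendsto 0).mono_left nhdsWithin_le_nhds
      simpa using ENNReal.Tendsto.const_mul (ENNReal.tendsto_ofReal h1) (a := ENNReal.ofReal (K j))
        (by simp)
    refine tendsto_of_tendsto_of_tendsto_of_le_of_le' tendsto_const_nhds hlim
      (Eventually.of_forall fun t => zero_le) ?_
    filter_upwards [self_mem_nhdsWithin] with t ht using hbound t ht
  · have hid : Tendsto (fun z : Fin d → ℝ => z) (comap ψ (𝓝 0)) (𝓝 x) := by
      refine tendsto_pi_nhds.2 fun j => ?_
      have h1 : Tendsto (fun z : Fin d → ℝ => exp (-z j) - exp (-x j)) (comap ψ (𝓝 0)) (𝓝 0) := by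
        have h2 : Tendsto (fun z => √(ψ z)) (comap ψ (𝓝 0)) (𝓝 0) := by
          have := (continuous_sqrt.tendsto 0).comp (tendsto_comap (f := ψ) (x := 𝓝 0))
          rwa [sqrt_zero] at this
        refine squeeze_zero_norm (fun z => ?_) h2
        rw [norm_eq_abs]
        refine abs_le_sqrt ?_
        exact Finset.single_le_sum (f := fun j => (exp (-z j) - exp (-x j)) ^ 2)
          (fun j _ => sq_nonneg _) (Finset.mem_univ j)
      have h3 := (h1.add_const (exp (-x j)))
      simp only [sub_add_cancel, zero_add] at h3
      have h4 := (h3.log (exp_pos _).ne').neg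
      simpa using h4
    exact (hφ.tendsto x).comp hid

end

section

variable {d : ℕ} {a : Fin d → ℝ}

/-- The density of the product gamma measure, for which the Laguerre semigroups are symmetric. -/
@[irreducible] noncomputable def gammaProd (a : Fin d → ℝ) (x : Fin d → ℝ) : ℝ≥0∞ :=
  ∏ j, gammaPDF (a j) 1 (x j)

@[fun_prop]
theorem measurable_gammaProd (a : Fin d → ℝ) : Measurable (gammaProd a) := by
  unfold gammaProd gammaPDF
  fun_prop

theorem lintegral_gammaProd (ha : ∀ j, 0 < a j) : ∫⁻ x, gammaProd a x = 1 := by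
  unfold gammaProd
  rw [lintegral_fin_prod_eq_prod (f := fun j y => gammaPDF (a j) 1 y)
    (fun j => by unfold gammaPDF; fun_prop)]
  simp [ProbabilityTheory.lintegral_gammaPDF_eq_one (ha _) one_pos]

theorem gammaProd_ne_zero (ha : ∀ j, 0 < a j) {x : Fin d → ℝ} (hx : x ∈ posOrthant d) :
    gammaProd a x ≠ 0 := by
  unfold gammaProd
  refine Finset.prod_ne_zero_iff.2 fun j _ => ?_
  have hxj : 0 < x j := hx j (mem_univ j)
  have := Gamma_pos_of_pos (ha j)
  rw [ProbabilityTheory.gammaPDF_of_nonneg hxj.le, Ne, ENNReal.ofReal_eq_zero, not_le]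
  positivity

theorem heatProd_symm (ha : ∀ j, 0 < a j) {s : ℝ} (hs : 0 < s) {x y : Fin d → ℝ}
    (hx : ∀ j, x j ≠ 0) (hy : ∀ j, y j ≠ 0) :
    gammaProd a x * heatProd a s x y = gammaProd a y * heatProd a s y x := by
  unfold gammaProd heatProd
  rw [← Finset.prod_mul_distrib, ← Finset.prod_mul_distrib]
  refine Finset.prod_congr rfl fun j _ => ?_
  rcases (hx j).lt_or_gt with h1 | h1
  · rw [ProbabilityTheory.gammaPDF_of_neg h1, heatDensity_of_neg h1, zero_mul, mul_zero]
  rcases (hy j).lt_or_gt with h2 | h2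
  · rw [ProbabilityTheory.gammaPDF_of_neg h2, heatDensity_of_neg h2, zero_mul, mul_zero]
  exact heatDensity_symm (ha j) hs h1 h2

theorem poissonDensity_symm (ha : ∀ j, 0 < a j) (t : ℝ) {x y : Fin d → ℝ}
    (hx : ∀ j, x j ≠ 0) (hy : ∀ j, y j ≠ 0) :
    gammaProd a x * poissonDensity a t x y = gammaProd a y * poissonDensity a t y x := by
  unfold poissonDensity
  rw [← lintegral_const_mul _ (by fun_prop), ← lintegral_const_mul _ (by fun_prop)]
  refine lintegral_congr_ae ?_
  filter_upwards [ae_stableMeasure_pos t] with s hs using heatProd_symm ha hs hx hy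

theorem ae_forall_coord_ne_zero : ∀ᵐ y : Fin d → ℝ, ∀ j, y j ≠ 0 :=
  ae_all_iff.2 fun j => (Measure.tendsto_eval_ae_ae
    (μ := fun _ : Fin d => (volume : Measure ℝ)) (i := j)).eventually (Measure.ae_ne volume 0)

theorem lintegral_poissonMeasure_eq (t : ℝ) (x : Fin d → ℝ) {F : (Fin d → ℝ) → ℝ≥0∞}
    (hF : Measurable F) :
    ∫⁻ y, F y ∂poissonMeasure a t x = ∫⁻ y, poissonDensity a t x y * F y := by
  rw [poissonMeasure, lintegral_withDensity_eq_lintegral_mul _ (by fun_prop) hF]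
  rfl

theorem lintegral_poissonMeasure_symm (ha : ∀ j, 0 < a j) (t : ℝ) {F G : (Fin d → ℝ) → ℝ≥0∞}
    (hF : Measurable F) (hG : Measurable G) :
    ∫⁻ x, gammaProd a x * (G x * ∫⁻ y, F y ∂poissonMeasure a t x) =
      ∫⁻ x, gammaProd a x * (F x * ∫⁻ y, G y ∂poissonMeasure a t x) := by
  have h : ∀ {F G : (Fin d → ℝ) → ℝ≥0∞}, Measurable F → ∀ x,
      gammaProd a x * (G x * ∫⁻ y, F y ∂poissonMeasure a t x) =
        ∫⁻ y, gammaProd a x * poissonDensity a t x y * (G x * F y) := fun {F G} hF x => by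
    rw [lintegral_poissonMeasure_eq t x hF, ← mul_assoc, ← lintegral_const_mul _ (by fun_prop)]
    exact lintegral_congr fun y => by ring
  simp_rw [h hF, h hG]
  rw [lintegral_lintegral_swap (by fun_prop)]
  refine lintegral_congr_ae ?_
  filter_upwards [ae_forall_coord_ne_zero] with x hx
  refine lintegral_congr_ae ?_
  filter_upwards [ae_forall_coord_ne_zero] with y hy
  rw [poissonDensity_symm ha t hy hx, mul_comm (G y)]

theorem lintegral_ofReal_add_eq {E : Type*} [MeasurableSpace E] {μ : Measure E}
    [IsProbabilityMeasure μ] {f : E → ℝ} {M : ℝ} (hf : Measurable f) (hM : ∀ z, |f z| ≤ M) :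
    ∫⁻ z, ENNReal.ofReal (f z + M) ∂μ = ENNReal.ofReal (∫ z, f z ∂μ + M) := by
  have hi : Integrable f μ := Integrable.of_bound hf.aestronglyMeasurable M
    (ae_of_all _ fun z => hM z)
  rw [← ofReal_integral_eq_lintegral_ofReal (f := fun z => f z + M) (hi.add (integrable_const M))
    (ae_of_all _ fun z => by simpa using (by linarith [neg_abs_le (f z), hM z] : 0 ≤ f z + M)),
    integral_add hi (integrable_const _)]
  simp

/-- A bounded function agrees almost everywhere with the boundary values of its Poisson integral,
whenever these exist. -/
theorem ae_eq_of_tendsto_integral_poissonMeasure (ha : ∀ j, 0 < a j)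
    {f g : (Fin d → ℝ) → ℝ} {M : ℝ} (hf : Measurable f) (hM : ∀ z, |f z| ≤ M)
    (hlim : ∀ x, Tendsto (fun τ => ∫ z, f z ∂poissonMeasure a τ x) (𝓝[>] 0) (𝓝 (g x)))
    (t : ℝ) (x : Fin d → ℝ) : ∀ᵐ y ∂poissonMeasure a t x, f y = g y := by
  have hfM : ∀ z, 0 ≤ f z + M := fun z => by linarith [neg_abs_le (f z), hM z]
  have hfM2 : ∀ z, f z + M ≤ 2 * M := fun z => by linarith [le_abs_self (f z), hM z]
  have hPf : ∀ τ > 0, ∀ x, |∫ z, f z ∂poissonMeasure a τ x| ≤ M := fun τ hτ x => by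
    have := isProbabilityMeasure_poissonMeasure ha hτ x
    simpa using norm_integral_le_of_norm_le_const (μ := poissonMeasure a τ x) (f := f) (C := M)
      (ae_of_all _ hM)
  have hgM : ∀ x, |g x| ≤ M := fun x =>
    le_of_tendsto (hlim x).abs (by filter_upwards [self_mem_nhdsWithin] with τ hτ using hPf τ hτ x)
  have hgm : Measurable g := measurable_of_tendsto_metrizable' (𝓝[>] (0 : ℝ))
    (fun τ => (measurable_integral_poissonMeasure ha hf).comp (measurable_const.prodMk measurable_id))
    (tendsto_pi_nhds.2 hlim)
  have hg0 : ∀ z, 0 ≤ g z + M := fun z => by linarith [neg_abs_le (g z), hgM z]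
  have hg2 : ∀ z, g z + M ≤ 2 * M := fun z => by linarith [le_abs_self (g z), hgM z]
  set F : (Fin d → ℝ) → ℝ≥0∞ := fun z => ENNReal.ofReal (f z + M)
  set G : (Fin d → ℝ) → ℝ≥0∞ := fun z => ENNReal.ofReal (g z + M)
  have hF : Measurable F := by fun_prop
  have hG : Measurable G := by fun_prop
  set m : Measure (Fin d → ℝ) := volume.withDensity (gammaProd a)
  have hmfin : IsFiniteMeasure m := isFiniteMeasure_withDensity (by simp [lintegral_gammaProd ha])
  have hfinite : ∀ {H : (Fin d → ℝ) → ℝ≥0∞}, (∀ z, H z ≤ ENNReal.ofReal (2 * M)) →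
      ∫⁻ z, H z ∂m ≠ ∞ := fun hH => ne_top_of_le_ne_top
    (ENNReal.mul_ne_top ENNReal.ofReal_ne_top (measure_ne_top m univ))
    ((lintegral_mono hH).trans_eq (lintegral_const _))
  have hFfin : ∫⁻ z, F z ∂m ≠ ∞ := hfinite fun z => ENNReal.ofReal_le_ofReal (hfM2 z)
  have hGfin : ∫⁻ z, G z ∂m ≠ ∞ := hfinite fun z => ENNReal.ofReal_le_ofReal (hg2 z)
  have hm_lint : ∀ {H : (Fin d → ℝ) → ℝ≥0∞}, Measurable H →
      ∫⁻ z, H z ∂m = ∫⁻ z, gammaProd a z * H z := fun hH =>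
    lintegral_withDensity_eq_lintegral_mul _ (by fun_prop) hH
  have hmO : ∀ᵐ z ∂m, z ∈ posOrthant d := by
    rw [ae_withDensity_iff (by fun_prop)]
    filter_upwards [ae_forall_coord_ne_zero] with z hz hne j _
    refine lt_of_le_of_ne (not_lt.1 fun hj => hne ?_) (hz j).symm
    unfold gammaProd
    exact Finset.prod_eq_zero (Finset.mem_univ j) (ProbabilityTheory.gammaPDF_of_neg hj)
  have hmP : ∀ {H : (Fin d → ℝ) → ℝ≥0∞} (τ : ℝ), Measurable H →
      Measurable fun x => ∫⁻ z, H z ∂poissonMeasure a τ x := fun {H} τ hH => by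
    simp_rw [lintegral_poissonMeasure_eq τ _ hH]
    exact Measurable.lintegral_prod_right' (f := fun p : (Fin d → ℝ) × (Fin d → ℝ) =>
      poissonDensity a τ p.1 p.2 * H p.2) (by fun_prop)
  have key : F =ᵐ[m] G := by
    have := isFiniteMeasure_withDensity hFfin
    have := isFiniteMeasure_withDensity hGfin
    refine (withDensity_eq_iff hF.aemeasurable hG.aemeasurable hFfin).1
      (ext_of_forall_lintegral_eq_of_IsFiniteMeasure fun φ => ?_)
    have hφm : Measurable fun z => (φ z : ℝ≥0∞) := φ.continuous.measurable.coe_nnreal_ennreal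
    obtain ⟨B, hφB⟩ : ∃ B : ℝ, ∀ z, |(φ z : ℝ)| ≤ B := ⟨nndist φ 0, fun z => by
      simpa only [NNReal.abs_eq] using
        NNReal.coe_le_coe.2 (BoundedContinuousFunction.NNReal.upper_bound φ z)⟩
    have hφB' : ∀ z, (φ z : ℝ≥0∞) ≤ ENNReal.ofReal B := fun z => by
      rw [← ENNReal.ofReal_coe_nnreal]
      exact ENNReal.ofReal_le_ofReal ((le_abs_self _).trans (hφB z))
    have hdom : ∀ {H₁ H₂ : (Fin d → ℝ) → ℝ≥0∞}, (∀ z, H₁ z ≤ ENNReal.ofReal B) →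
        (∀ z, H₂ z ≤ ENNReal.ofReal (2 * M)) →
        ∀ z, H₁ z * H₂ z ≤ ENNReal.ofReal B * ENNReal.ofReal (2 * M) :=
      fun h1 h2 z => mul_le_mul' (h1 z) (h2 z)
    have hbfin : ∫⁻ _, ENNReal.ofReal B * ENNReal.ofReal (2 * M) ∂m ≠ ∞ := by
      rw [lintegral_const]
      exact ENNReal.mul_ne_top (ENNReal.mul_ne_top ENNReal.ofReal_ne_top ENNReal.ofReal_ne_top)
        (measure_ne_top m univ)
    rw [lintegral_withDensity_eq_lintegral_mul _ hF hφm,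
      lintegral_withDensity_eq_lintegral_mul _ hG hφm]
    have lim1 : Tendsto (fun τ => ∫⁻ z, φ z * ∫⁻ y, F y ∂poissonMeasure a τ z ∂m) (𝓝[>] 0)
        (𝓝 (∫⁻ z, φ z * G z ∂m)) := by
      refine tendsto_lintegral_filter_of_dominated_convergence _
        (Eventually.of_forall fun τ => hφm.mul (hmP τ hF)) ?_ hbfin (ae_of_all _ fun z => ?_)
      · filter_upwards [self_mem_nhdsWithin] with τ hτ
        refine ae_of_all _ (hdom hφB' fun z => ?_)
        have := isProbabilityMeasure_poissonMeasure ha hτ z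
        rw [lintegral_ofReal_add_eq hf hM]
        have hle := (le_abs_self _).trans (hPf τ hτ z)
        exact ENNReal.ofReal_le_ofReal (by linarith)
      · refine ENNReal.Tendsto.const_mul ?_ (Or.inr ENNReal.coe_ne_top)
        refine (ENNReal.tendsto_ofReal ((hlim z).add_const M)).congr' ?_
        filter_upwards [self_mem_nhdsWithin] with τ hτ
        have := isProbabilityMeasure_poissonMeasure ha hτ z
        exact (lintegral_ofReal_add_eq hf hM).symm
    have hPφ : ∀ τ > 0, ∀ z, ∫⁻ y, φ y ∂poissonMeasure a τ z =
        ENNReal.ofReal (∫ y, (φ y : ℝ) ∂poissonMeasure a τ z) := fun τ hτ z => by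
      have := isProbabilityMeasure_poissonMeasure ha hτ z
      rw [ofReal_integral_eq_lintegral_ofReal (Integrable.of_bound
        (φ.continuous.measurable.coe_nnreal_real).aestronglyMeasurable B (ae_of_all _ hφB))
        (ae_of_all _ fun z => NNReal.coe_nonneg _)]
      simp
    have lim2 : Tendsto (fun τ => ∫⁻ z, (∫⁻ y, φ y ∂poissonMeasure a τ z) * F z ∂m) (𝓝[>] 0)
        (𝓝 (∫⁻ z, φ z * F z ∂m)) := by
      refine tendsto_lintegral_filter_of_dominated_convergence _
        (Eventually.of_forall fun τ => (hmP τ hφm).mul hF) ?_ hbfin ?_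
      · filter_upwards [self_mem_nhdsWithin] with τ hτ
        refine ae_of_all _ (hdom (fun z => ?_) fun z => ENNReal.ofReal_le_ofReal (hfM2 z))
        have := isProbabilityMeasure_poissonMeasure ha hτ z
        exact (lintegral_mono hφB').trans_eq (by simp)
      · filter_upwards [hmO] with z hz
        refine ENNReal.Tendsto.mul_const ?_ (Or.inr ENNReal.ofReal_ne_top)
        rw [← ENNReal.ofReal_coe_nnreal]
        refine (ENNReal.tendsto_ofReal (tendsto_integral_poissonMeasure ha hz
          (φ := fun y => (φ y : ℝ)) (by fun_prop) hφB)).congr' ?_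
        filter_upwards [self_mem_nhdsWithin] with τ hτ using (hPφ τ hτ z).symm
    have hsymm : ∀ τ, ∫⁻ z, φ z * ∫⁻ y, F y ∂poissonMeasure a τ z ∂m =
        ∫⁻ z, (∫⁻ y, φ y ∂poissonMeasure a τ z) * F z ∂m := fun τ => by
      refine (hm_lint (hφm.mul (hmP τ hF))).trans (Eq.trans ?_ (hm_lint ((hmP τ hφm).mul hF)).symm)
      refine (lintegral_poissonMeasure_symm ha τ hF hφm).trans ?_
      exact lintegral_congr fun z => by rw [Pi.mul_apply, mul_comm (F z)]
    have h := tendsto_nhds_unique (lim2.congr fun τ => (hsymm τ).symm) lim1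
    simpa only [Pi.mul_apply, mul_comm] using h
  have hkey : ∀ᵐ y, gammaProd a y ≠ 0 → F y = G y := (ae_withDensity_iff (by fun_prop)).1 key
  have hO := ae_mem_posOrthant_poissonMeasure (a := a) t x
  have hac : poissonMeasure a t x ≪ volume := by
    rw [poissonMeasure]; exact withDensity_absolutelyContinuous _ _
  filter_upwards [hO, hac.ae_le hkey] with y hy hFG
  have := (ENNReal.ofReal_eq_ofReal_iff (hfM y) (hg0 y)).1 (hFG (gammaProd_ne_zero ha hy))
  linarith

end

section
variable {d : ℕ} {α : Fin d → ℝ}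

theorem iteratedDeriv_plP (hα : ∀ j, -1 < α j) {t : ℝ} (ht : 0 < t) {x : Fin d → ℝ}
    (hx : x ∈ posOrthant d) (f : (Fin d → ℝ) → ℝ) (n : ℕ) :
    iteratedDeriv n (fun u => plP d α u f x) t =
      iteratedDeriv n (fun u => ∫ y, f y ∂poissonMeasure (fun j => α j + 1) u x) t := by
  refine Filter.EventuallyEq.iteratedDeriv_eq n ?_
  filter_upwards [lt_mem_nhds ht] with u hu using plP_eq_integral_poissonMeasure hα hu hx f

theorem laguerreFracDerivK_eq_fracInt (hα : ∀ j, -1 < α j) (lam : ℝ) (k : ℕ)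
    (f : (Fin d → ℝ) → ℝ) {x : Fin d → ℝ} (hx : x ∈ posOrthant d) :
    laguerreFracDerivK d α lam k f x =
      (1 / ∫ u in Ioi (0 : ℝ), u ^ (-lam - 1) * (exp (-u) - 1) ^ k) *
        fracInt (poissonMeasure fun j => α j + 1) lam k f x := by
  unfold laguerreFracDerivK fracInt
  congr 1
  refine setIntegral_congr_fun measurableSet_Ioi fun s hs => ?_
  have hs : 0 < s := hs
  simp only [fwdDiff_iter_eq_sum_choose]
  congr 1
  refine Finset.sum_congr rfl fun j _ => ?_
  congr 1
  unfold setAtZero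
  split_ifs with h
  · rw [plP, if_pos h]
  · exact plP_eq_integral_poissonMeasure hα
      (lt_of_le_of_ne (by positivity) (Ne.symm h)) hx f

end

theorem laguerreFracDerivK_bounded_on_lipschitz
    (d : ℕ) (hd : 1 ≤ d) (α : Fin d → ℝ) (hα : ∀ j, -(1 / 2 : ℝ) < α j)
    (lam β : ℝ) (hlam : 1 ≤ lam) (hlamβ : lam < β) :
    ∃ C > 0, ∀ (f : (Fin d → ℝ) → ℝ) (M A : ℝ), Measurable f → (∀ y, |f y| ≤ M) →
      (∀ t > (0 : ℝ), ∀ x ∈ posOrthant d,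
        |iteratedDeriv (⌊β⌋₊ + 1) (fun u => plP d α u f x) t| ≤
          A * t ^ (β - ((⌊β⌋₊ : ℝ) + 1))) →
      (∀ x ∈ posOrthant d,
        |laguerreFracDerivK d α lam (⌊lam⌋₊ + 1) f x| ≤ C * (M + A)) ∧
      (∀ t > (0 : ℝ), ∀ x ∈ posOrthant d,
        |iteratedDeriv (⌊β⌋₊ + 1)
            (fun u => plP d α u (laguerreFracDerivK d α lam (⌊lam⌋₊ + 1) f) x) t| ≤
          C * (M + A) * t ^ (β - lam - ((⌊β⌋₊ : ℝ) + 1))) := by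
  have hα1 : ∀ j, -1 < α j := fun j => by linarith [hα j]
  have ha : ∀ j, 0 < α j + 1 := fun j => by linarith [hα j]
  have hflow := isAnalyticFlow_poissonMeasure ha
  obtain ⟨K, hK, hbound⟩ := hflow.exists_fracInt_bound
    (fun f M g hf hM hl t _ x => ae_eq_of_tendsto_integral_poissonMeasure ha hf hM hl t x)
    hlam hlamβ
  set P := poissonMeasure fun j => α j + 1
  set n := ⌊β⌋₊ + 1 with hn
  set k := ⌊lam⌋₊ + 1
  have hncast : ((⌊β⌋₊ : ℝ) + 1) = (n : ℝ) := by rw [hn]; push_cast; rfl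
  rw [hncast]
  set c : ℝ := 1 / ∫ u in Ioi (0 : ℝ), u ^ (-lam - 1) * (exp (-u) - 1) ^ k with hc
  set q : ℝ := 2 ^ (-(β - n)) with hq
  have hq0 : 0 < q := by positivity
  have hO : ∀ t > 0, ∀ x, ∀ᵐ y ∂P t x, y ∈ posOrthant d := fun t _ x =>
    ae_mem_posOrthant_poissonMeasure t x
  refine ⟨|c| * K * (1 + q) + 1, by positivity, fun f M A hf hM hA => ?_⟩
  have hM0 : 0 ≤ M := (abs_nonneg _).trans (hM 0)
  have hA0 : 0 ≤ A := by
    have h := hA 1 one_pos (fun _ => 1) (fun _ _ => mem_Ioi.2 one_pos)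
    rw [one_rpow, mul_one] at h
    exact (abs_nonneg _).trans h
  obtain ⟨L, -, hL⟩ := IsOrbit.iteratedDeriv hflow 0 le_rfl n
  have horbit := (hL _ M (hflow.isOrbit hf hM) hM0
    (fun t ht x => by simpa using hflow.abs_integral_le hM ht x)).1
  obtain ⟨h1, h2⟩ := hbound f M (A * q) hf hM (by positivity)
    (horbit.bound_of_ae hflow hO fun t ht x hx => by
      rw [← iteratedDeriv_plP hα1 ht hx]
      exact hA t ht x hx)
  have hfrac : ∀ x ∈ posOrthant d, laguerreFracDerivK d α lam k f x = c * fracInt P lam k f x :=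
    fun x hx => laguerreFracDerivK_eq_fracInt hα1 lam k f hx
  have hconst : |c| * (K * (M + A * q)) ≤ (|c| * K * (1 + q) + 1) * (M + A) := by
    have : M + A * q ≤ (1 + q) * (M + A) := by nlinarith [mul_nonneg hq0.le hM0]
    have := mul_le_mul_of_nonneg_left this (by positivity : 0 ≤ |c| * K)
    linarith
  refine ⟨fun x hx => ?_, fun t ht x hx => ?_⟩
  · rw [hfrac x hx, abs_mul]
    exact (mul_le_mul_of_nonneg_left (h1 x) (abs_nonneg c)).trans hconst
  · rw [iteratedDeriv_plP hα1 ht hx]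
    have heq : ∀ᶠ u in 𝓝 t, ∫ y, laguerreFracDerivK d α lam k f y ∂P u x =
        c * ∫ y, fracInt P lam k f y ∂P u x := by
      filter_upwards [lt_mem_nhds ht] with u hu
      rw [← integral_const_mul]
      exact integral_congr_ae ((hO u hu x).mono hfrac)
    rw [Filter.EventuallyEq.iteratedDeriv_eq n heq, iteratedDeriv_const_mul_field, abs_mul]
    calc _ ≤ |c| * (K * (M + A * q) * t ^ (β - lam - n)) :=
          mul_le_mul_of_nonneg_left (h2 t ht x) (abs_nonneg c)
      _ = |c| * (K * (M + A * q)) * t ^ (β - lam - n) := by ring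
      _ ≤ _ := by gcongr
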